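/- arXiv:1606.07850 — 5 statements merged into one kernel-verified Lean document; each statement's English description precedes it below -/
import Mathlib

section
/- Let b > 0, let l ≥ -1/2 be real, and let f ∈ C²([0,b]). Define g(x) = x^{-l}/(2^{l+1/2} Γ(l+3/2)) · ∫₀ˣ (x² - s²)^l (f(s) - f'(0)·s) ds. Then for every x ∈ (0,b], g is twice differentiable at x and g''(x) - (l(l+1)/x²)·g(x) = x^{-l}/(2^{l+1/2} Γ(l+3/2)) · ∫₀ˣ (x² - s²)^l f''(s) ds. -/
/-!
For `x > 0` the substitution `s = x t` turns `Y_l f` into a constant multiple of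
`x ^ (l + 1) • h x`, where `h x = ∫₀¹ (1 - t²) ^ l f (x t) dt` can be differentiated under the
integral sign without touching the singular weight. Conjugation by `x ^ (l + 1)` turns
`d²/dx² - l (l + 1) / x²` into `d²/dx² + (2 (l + 1) / x) d/dx`. Integrating the derivative of
`(1 - t²) ^ (l + 1) f' (x t)` over `[0, 1]` shows that the latter operator sends `h` to
`∫₀¹ (1 - t²) ^ l f'' (x t) dt` plus the boundary contribution `f' 0 / x`, which disappears once
the linear part of `f` is removed.
-/

open MeasureTheory Set

variable {E : Type*} [NormedAddCommGroup E] [NormedSpace ℝ E]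

/-- The average of the dilates `x ↦ f (x t)`, `0 ≤ t ≤ 1`, against the weight `w`. Up to a power of
`x` this is `Y_l` on `(0, ∞)`, with a weight that no longer depends on `x`. -/
noncomputable def dilationIntegral (w : ℝ → ℝ) (f : ℝ → E) (x : ℝ) : E :=
  ∫ t in (0 : ℝ)..1, w t • f (x * t)

/-- The transmutation operator `Y_l`, for functions with values in a normed space. At `x = 0` the
integral is empty, in accordance with the convention `(Y_l f)(0) = 0`. -/
noncomputable def transmutation (l : ℝ) (f : ℝ → E) (x : ℝ) : E :=
  (x ^ (-l) / (2 ^ (l + 1 / 2) * Real.Gamma (l + 3 / 2))) •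
    ∫ s in (0 : ℝ)..x, (x ^ 2 - s ^ 2) ^ l • f s

theorem intervalIntegrable_one_sub_sq_rpow {l : ℝ} (hl : -1 < l) :
    IntervalIntegrable (fun t : ℝ => (1 - t ^ 2) ^ l) volume 0 1 := by
  have integrable_one_sub : IntervalIntegrable (fun t : ℝ => (1 - t) ^ l) volume 0 1 := by
    simpa using (intervalIntegral.intervalIntegrable_rpow' (a := 1) (b := 0) hl).comp_sub_left 1
  have continuousOn_one_add : ContinuousOn (fun t : ℝ => (1 + t) ^ l) (uIcc 0 1) := by
    rw [uIcc_of_le zero_le_one]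
    exact ContinuousOn.rpow_const (by fun_prop) fun t ht => Or.inl (by linarith [ht.1])
  refine (integrable_one_sub.mul_continuousOn continuousOn_one_add).congr fun t ht => ?_
  rw [uIoc_of_le zero_le_one] at ht
  rw [← Real.mul_rpow (by linarith [ht.2]) (by linarith [ht.1])]
  ring_nf

theorem intervalIntegrable_id_mul {w : ℝ → ℝ} {a b : ℝ} (hw : IntervalIntegrable w volume a b) :
    IntervalIntegrable (fun t => t * w t) volume a b :=
  hw.continuousOn_mul continuousOn_id

theorem intervalIntegrable_smul_dilate {w : ℝ → ℝ} {f : ℝ → E} {a b : ℝ}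
    (hw : IntervalIntegrable w volume a b) (hf : Continuous f) (x : ℝ) :
    IntervalIntegrable (fun t => w t • f (x * t)) volume a b :=
  hw.smul_continuousOn (by fun_prop)

theorem hasDerivAt_dilationIntegral {w : ℝ → ℝ} {f f' : ℝ → E}
    (hw : IntervalIntegrable w volume 0 1) (hf : ∀ x, HasDerivAt f (f' x) x)
    (hf' : Continuous f') (x : ℝ) :
    HasDerivAt (dilationIntegral w f) (dilationIntegral (fun t => t * w t) f' x) x := by
  have hfc : Continuous f := continuous_iff_continuousAt.2 fun y => (hf y).continuousAt
  have integrable := intervalIntegrable_smul_dilate hw hfc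
  have integrable_weight := intervalIntegrable_id_mul hw
  have integrable_deriv := intervalIntegrable_smul_dilate integrable_weight hf' x
  obtain ⟨M, hM⟩ := ((isCompact_closedBall x 1).prod (isCompact_Icc (a := (0 : ℝ)) (b := 1))
    ).exists_bound_of_continuousOn (f := fun p => f' (p.1 * p.2)) (by fun_prop)
  refine (intervalIntegral.hasDerivAt_integral_of_dominated_loc_of_deriv_le
    (F' := fun y t => (t * w t) • f' (y * t)) (bound := fun t => ‖t * w t‖ * M)
    (Metric.ball_mem_nhds x one_pos)
    (.of_forall fun y => (integrable y).aestronglyMeasurable_restrict_uIoc) (integrable x)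
    integrable_deriv.aestronglyMeasurable_restrict_uIoc (.of_forall fun t ht y hy => ?_)
    (integrable_weight.norm.mul_const M) (.of_forall fun t _ y _ => ?_)).2
  · rw [uIoc_of_le zero_le_one] at ht
    rw [norm_smul]
    gcongr
    exact hM (y, t) ⟨Metric.ball_subset_closedBall hy, Ioc_subset_Icc_self ht⟩
  · have deriv_dilate := (hf (y * t)).scomp y (hasDerivAt_mul_const t)
    exact (deriv_dilate.const_smul (w t)).congr_deriv (by module)

theorem hasDerivAt_one_sub_sq_rpow_smul_dilate (l : ℝ) {f : ℝ → E} {f' : E} {x t : ℝ}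
    (hf : HasDerivAt f f' (x * t)) (ht : 0 < 1 - t ^ 2) :
    HasDerivAt (fun t : ℝ => (1 - t ^ 2) ^ (l + 1) • f (x * t))
      (x • (1 - t ^ 2) ^ l • f' - (x • (t * (t * (1 - t ^ 2) ^ l)) • f' +
        (2 * (l + 1)) • (t * (1 - t ^ 2) ^ l) • f (x * t))) t := by
  have deriv_weight := ((hasDerivAt_pow 2 t).const_sub 1).rpow_const (p := l + 1) (Or.inl ht.ne')
  have deriv_dilate := hf.scomp t (hasDerivAt_const_mul x)
  refine (deriv_weight.smul deriv_dilate).congr_deriv ?_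
  rw [add_sub_cancel_right, Real.rpow_add_one ht.ne']
  simp only [Function.comp_apply]
  match_scalars <;> push_cast <;> ring

theorem dilationIntegral_by_parts [CompleteSpace E] {l : ℝ} (hl : -1 < l)
    {f f' : ℝ → E} (hf : ∀ x, HasDerivAt f (f' x) x) (hf' : Continuous f') (x : ℝ) :
    x • dilationIntegral (fun t => t * (t * (1 - t ^ 2) ^ l)) f' x +
        (2 * (l + 1)) • dilationIntegral (fun t => t * (1 - t ^ 2) ^ l) f x =
      x • dilationIntegral (fun t => (1 - t ^ 2) ^ l) f' x + f 0 := by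
  have hfc : Continuous f := continuous_iff_continuousAt.2 fun y => (hf y).continuousAt
  have hw₀ := intervalIntegrable_one_sub_sq_rpow hl
  have hw₁ := intervalIntegrable_id_mul hw₀
  have hw₂ := intervalIntegrable_id_mul hw₁
  have i₀ : IntervalIntegrable (fun t => x • (1 - t ^ 2) ^ l • f' (x * t)) volume 0 1 :=
    (intervalIntegrable_smul_dilate hw₀ hf' x).smul x
  have i₁ : IntervalIntegrable (fun t => (2 * (l + 1)) • (t * (1 - t ^ 2) ^ l) • f (x * t))
      volume 0 1 := (intervalIntegrable_smul_dilate hw₁ hfc x).smul (2 * (l + 1))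
  have i₂ : IntervalIntegrable (fun t => x • (t * (t * (1 - t ^ 2) ^ l)) • f' (x * t))
      volume 0 1 := (intervalIntegrable_smul_dilate hw₂ hf' x).smul x
  have continuous_boundary : Continuous fun t : ℝ => (1 - t ^ 2) ^ (l + 1) • f (x * t) :=
    (Continuous.rpow_const (by fun_prop) fun _ => Or.inr (by linarith)).smul (by fun_prop)
  have boundary := intervalIntegral.integral_eq_sub_of_hasDerivAt_of_le zero_le_one
    continuous_boundary.continuousOn (fun t ht => hasDerivAt_one_sub_sq_rpow_smul_dilate l
      (hf (x * t)) (by nlinarith [ht.1, ht.2])) (i₀.sub (i₂.add i₁))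
  have boundary_one : ((1 : ℝ) - 1 ^ 2) ^ (l + 1) • f (x * 1) = 0 := by
    rw [one_pow, sub_self, Real.zero_rpow (by linarith), zero_smul]
  have boundary_zero : ((1 : ℝ) - 0 ^ 2) ^ (l + 1) • f (x * 0) = f 0 := by simp
  rw [boundary_one, boundary_zero, intervalIntegral.integral_sub i₀ (i₂.add i₁),
    intervalIntegral.integral_add i₂ i₁] at boundary
  simp only [intervalIntegral.integral_smul, zero_sub] at boundary
  rw [← sub_eq_iff_eq_add', ← neg_sub]
  exact neg_eq_iff_eq_neg.2 boundary

theorem transmutation_eq_dilationIntegral (l : ℝ) (f : ℝ → E) {x : ℝ} (hx : 0 < x) :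
    transmutation l f x = (2 ^ (l + 1 / 2) * Real.Gamma (l + 3 / 2))⁻¹ •
      x ^ (l + 1) • dilationIntegral (fun t => (1 - t ^ 2) ^ l) f x := by
  have weight_dilate : ∀ t ∈ uIcc (0 : ℝ) 1, (x ^ 2 - (x * t) ^ 2) ^ l • f (x * t) =
      x ^ (2 * l) • (1 - t ^ 2) ^ l • f (x * t) := by
    intro t ht
    rw [uIcc_of_le zero_le_one] at ht
    rw [show x ^ 2 - (x * t) ^ 2 = x ^ 2 * (1 - t ^ 2) by ring,
      Real.mul_rpow (by positivity) (by nlinarith [ht.1, ht.2]), ← Real.rpow_natCast_mul hx.le,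
      mul_smul, Nat.cast_ofNat]
  have substitution : ∫ s in (0 : ℝ)..x, (x ^ 2 - s ^ 2) ^ l • f s =
      x • x ^ (2 * l) • dilationIntegral (fun t => (1 - t ^ 2) ^ l) f x := by
    rw [dilationIntegral, ← intervalIntegral.integral_smul,
      ← intervalIntegral.integral_congr weight_dilate,
      intervalIntegral.smul_integral_comp_mul_left (fun s => (x ^ 2 - s ^ 2) ^ l • f s),
      mul_zero, mul_one]
  have powers : x ^ (l + 1) = x ^ (-l) * (x * x ^ (2 * l)) := by
    rw [mul_comm x, ← Real.rpow_add_one hx.ne', ← Real.rpow_add hx]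
    ring_nf
  rw [transmutation, substitution, powers]
  module

theorem transmutation_congr (l : ℝ) {f g : ℝ → E} {x : ℝ} (hx : 0 ≤ x)
    (hfg : EqOn f g (Icc 0 x)) : transmutation l f x = transmutation l g x := by
  rw [← uIcc_of_le hx] at hfg
  rw [transmutation, transmutation,
    intervalIntegral.integral_congr fun s hs => congrArg ((x ^ 2 - s ^ 2) ^ l • ·) (hfg hs)]

theorem exists_hasDerivAt_rpow_smul (l : ℝ) {h h' h'' : ℝ → E}
    (hh : ∀ x, HasDerivAt h (h' x) x) (hh' : ∀ x, HasDerivAt h' (h'' x) x) :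
    ∃ u' u'' : ℝ → E, ∀ x, 0 < x →
      HasDerivAt (fun y => y ^ (l + 1) • h y) (u' x) x ∧ HasDerivAt u' (u'' x) x ∧
      u'' x - (l * (l + 1) / x ^ 2) • x ^ (l + 1) • h x =
        x ^ l • (x • h'' x + (2 * (l + 1)) • h' x) := by
  have deriv_rpow (p x : ℝ) (hx : 0 < x) : HasDerivAt (fun y : ℝ => y ^ p) (p * x ^ (p - 1)) x :=
    Real.hasDerivAt_rpow_const (Or.inl hx.ne')
  refine ⟨fun x => x ^ (l + 1) • h' x + ((l + 1) * x ^ l) • h x, fun x =>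
    (x ^ (l + 1) • h'' x + ((l + 1) * x ^ l) • h' x) +
      (((l + 1) * x ^ l) • h' x + ((l + 1) * (l * x ^ (l - 1))) • h x), fun x hx => ?_⟩
  have deriv_rpow_add_one := deriv_rpow (l + 1) x hx
  rw [add_sub_cancel_right] at deriv_rpow_add_one
  refine ⟨deriv_rpow_add_one.smul (hh x), (deriv_rpow_add_one.smul (hh' x)).add
    (((deriv_rpow l x hx).const_mul (l + 1)).smul (hh x)), ?_⟩
  dsimp only
  rw [Real.rpow_add_one hx.ne', Real.rpow_sub_one hx.ne']
  match_scalars <;> field_simp <;> ring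

theorem exists_hasDerivAt_transmutation [CompleteSpace E] {l : ℝ} (hl : -1 < l)
    {f f' f'' : ℝ → E} (hf : ∀ x, HasDerivAt f (f' x) x) (hf' : ∀ x, HasDerivAt f' (f'' x) x)
    (hf'' : Continuous f'') :
    ∃ g' g'' : ℝ → E, ∀ x, 0 < x →
      HasDerivAt (transmutation l f) (g' x) x ∧ HasDerivAt g' (g'' x) x ∧
      g'' x - (l * (l + 1) / x ^ 2) • transmutation l f x = transmutation l f'' x +
        (x ^ l / (2 ^ (l + 1 / 2) * Real.Gamma (l + 3 / 2))) • f' 0 := by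
  set D : ℝ := 2 ^ (l + 1 / 2) * Real.Gamma (l + 3 / 2) with hD
  have hw := intervalIntegrable_one_sub_sq_rpow hl
  have hf'c : Continuous f' := continuous_iff_continuousAt.2 fun y => (hf' y).continuousAt
  obtain ⟨u', u'', hu⟩ := exists_hasDerivAt_rpow_smul l (hasDerivAt_dilationIntegral hw hf hf'c)
    (hasDerivAt_dilationIntegral (intervalIntegrable_id_mul hw) hf' hf'')
  refine ⟨fun x => D⁻¹ • u' x, fun x => D⁻¹ • u'' x, fun x hx => ?_⟩
  obtain ⟨hu', hu'', conjugated⟩ := hu x hx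
  have eventually_eq := Filter.eventuallyEq_of_mem (Ioi_mem_nhds hx) fun _ hy =>
    transmutation_eq_dilationIntegral l f hy
  refine ⟨(hu'.const_smul D⁻¹).congr_of_eventuallyEq eventually_eq, hu''.const_smul D⁻¹, ?_⟩
  rw [dilationIntegral_by_parts hl hf' hf''] at conjugated
  rw [transmutation_eq_dilationIntegral l f hx, transmutation_eq_dilationIntegral l f'' hx, ← hD,
    smul_comm _ D⁻¹, ← smul_sub, conjugated, Real.rpow_add_one hx.ne']
  module

theorem exists_hasDerivAt_eqOn_Icc [CompleteSpace E] {a b : ℝ} {f f' k : ℝ → E}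
    (hf : ∀ x ∈ Icc a b, HasDerivWithinAt f (f' x) (Icc a b) x) (hk : Continuous k)
    (hkf : EqOn k f' (Icc a b)) :
    ∃ F : ℝ → E, (∀ x, HasDerivAt F (k x) x) ∧ EqOn F f (Icc a b) := by
  refine ⟨fun x => f a + ∫ t in a..x, k t,
    fun x => (hk.integral_hasStrictDerivAt a x).hasDerivAt.const_add _, fun x hx => ?_⟩
  have hsub : Icc a x ⊆ Icc a b := Icc_subset_Icc_right hx.2
  have integral_eq : ∫ t in a..x, k t = f x - f a :=
    intervalIntegral.integral_eq_sub_of_hasDerivAt_of_le hx.1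
      (fun t ht => ((hf t (hsub ht)).continuousWithinAt).mono hsub)
      (fun t ht => by
        have ht' := hsub (Ioo_subset_Icc_self ht)
        rw [hkf ht']
        exact (hf t ht').hasDerivAt (Icc_mem_nhds ht.1 (ht.2.trans_le hx.2)))
      (hk.intervalIntegrable a x)
  exact (congrArg (f a + ·) integral_eq).trans (add_sub_cancel _ _)

theorem exists_hasDerivWithinAt_transmutation [CompleteSpace E] {b l : ℝ} (hb : 0 < b)
    (hl : -1 < l) {f f' f'' : ℝ → E}
    (hf : ∀ x ∈ Icc 0 b, HasDerivWithinAt f (f' x) (Icc 0 b) x)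
    (hf' : ∀ x ∈ Icc 0 b, HasDerivWithinAt f' (f'' x) (Icc 0 b) x)
    (hf'' : ContinuousOn f'' (Icc 0 b)) :
    ∃ g' g'' : ℝ → E,
      (∀ x ∈ Ioc 0 b, HasDerivWithinAt (transmutation l f) (g' x) (Ioc 0 b) x) ∧
      (∀ x ∈ Ioc 0 b, HasDerivWithinAt g' (g'' x) (Ioc 0 b) x) ∧
      ∀ x ∈ Ioc 0 b,
        g'' x - (l * (l + 1) / x ^ 2) • transmutation l f x = transmutation l f'' x +
          (x ^ l / (2 ^ (l + 1 / 2) * Real.Gamma (l + 3 / 2))) • f' 0 := by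
  obtain ⟨F'', hF'', eq''⟩ : ∃ F'' : ℝ → E, Continuous F'' ∧ EqOn F'' f'' (Icc 0 b) :=
    ⟨IccExtend hb.le ((Icc 0 b).domRestrict f''),
      (continuousOn_iff_continuous_domRestrict.1 hf'').Icc_extend',
      fun x hx => IccExtend_of_mem hb.le _ hx⟩
  obtain ⟨F', hF', eq'⟩ := exists_hasDerivAt_eqOn_Icc hf' hF'' eq''
  have hF'c : Continuous F' := continuous_iff_continuousAt.2 fun y => (hF' y).continuousAt
  obtain ⟨F, hF, eq⟩ := exists_hasDerivAt_eqOn_Icc hf hF'c eq'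
  obtain ⟨g', g'', hg⟩ := exists_hasDerivAt_transmutation hl hF hF' hF''
  have transmutation_eq {u v : ℝ → E} (huv : EqOn u v (Icc 0 b)) :
      EqOn (transmutation l u) (transmutation l v) (Ioc 0 b) := fun x hx =>
    transmutation_congr l hx.1.le (huv.mono (Icc_subset_Icc_right hx.2))
  refine ⟨g', g'', fun x hx => ?_, fun x hx => (hg x hx.1).2.1.hasDerivWithinAt, fun x hx => ?_⟩
  · exact (hg x hx.1).1.hasDerivWithinAt.congr_of_mem (transmutation_eq eq).symm hx
  · rw [← transmutation_eq eq hx, ← transmutation_eq eq'' hx, ← eq' (left_mem_Icc.2 hb.le)]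
    exact (hg x hx.1).2.2

theorem stmt_0_general [CompleteSpace E] {b l : ℝ} (hb : 0 < b) (hl : -1 < l)
    {f f' f'' : ℝ → E}
    (hf : ∀ x ∈ Icc 0 b, HasDerivWithinAt f (f' x) (Icc 0 b) x)
    (hf' : ∀ x ∈ Icc 0 b, HasDerivWithinAt f' (f'' x) (Icc 0 b) x)
    (hf'' : ContinuousOn f'' (Icc 0 b)) :
    ∃ g' g'' : ℝ → E,
      (∀ x ∈ Ioc 0 b,
        HasDerivWithinAt (transmutation l fun s => f s - s • f' 0) (g' x) (Ioc 0 b) x) ∧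
      (∀ x ∈ Ioc 0 b, HasDerivWithinAt g' (g'' x) (Ioc 0 b) x) ∧
      ∀ x ∈ Ioc 0 b,
        g'' x - (l * (l + 1) / x ^ 2) • transmutation l (fun s => f s - s • f' 0) x =
          transmutation l f'' x := by
  have deriv_sub_linear : ∀ x ∈ Icc 0 b,
      HasDerivWithinAt (fun s => f s - s • f' 0) (f' x - f' 0) (Icc 0 b) x := fun x hx =>
    ((hf x hx).sub ((hasDerivWithinAt_id x _).smul_const (f' 0))).congr_deriv (by rw [one_smul])
  simpa only [sub_self, smul_zero, add_zero] using exists_hasDerivWithinAt_transmutation hb hl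
    deriv_sub_linear (fun x hx => (hf' x hx).sub_const (f' 0)) hf''

/-- The operator `Y_l` intertwines `d²/dx²` with the singular
operator `d²/dx² - l(l+1)/x²` on `C²([0,b])` functions with the linear part
`f'(0)·x` removed. -/
theorem stmt_0 (b l : ℝ) (hb : 0 < b) (hl : -(1/2) ≤ l)
    (f f' f'' : ℝ → ℝ)
    (hf1 : ∀ x ∈ Set.Icc (0:ℝ) b, HasDerivWithinAt f (f' x) (Set.Icc 0 b) x)
    (hf2 : ∀ x ∈ Set.Icc (0:ℝ) b, HasDerivWithinAt f' (f'' x) (Set.Icc 0 b) x)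
    (hf3 : ContinuousOn f'' (Set.Icc 0 b))
    (g : ℝ → ℝ)
    (hg : ∀ x : ℝ, g x = x ^ (-l) / (2 ^ (l + 1/2) * Real.Gamma (l + 3/2)) *
        ∫ s in (0:ℝ)..x, (x ^ 2 - s ^ 2) ^ l * (f s - f' 0 * s)) :
    ∃ g' g'' : ℝ → ℝ,
      (∀ x ∈ Set.Ioc (0:ℝ) b, HasDerivWithinAt g (g' x) (Set.Ioc 0 b) x) ∧
      (∀ x ∈ Set.Ioc (0:ℝ) b, HasDerivWithinAt g' (g'' x) (Set.Ioc 0 b) x) ∧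
      ∀ x ∈ Set.Ioc (0:ℝ) b,
        g'' x - l * (l + 1) / x ^ 2 * g x =
          x ^ (-l) / (2 ^ (l + 1/2) * Real.Gamma (l + 3/2)) *
            ∫ s in (0:ℝ)..x, (x ^ 2 - s ^ 2) ^ l * f'' s := by
  obtain rfl : g = transmutation l fun s => f s - s • f' 0 := funext fun x => by
    simpa only [transmutation, smul_eq_mul, mul_comm (f' 0)] using hg x
  exact stmt_0_general hb (by linarith) hf1 hf2 hf3
end

section
/- Let l ≥ -1/2 be real and let ω > 0. Then for every x > 0, x^{-l}/(2^{l+1/2} Γ(l+3/2)) · ∫₀ˣ (x² - s²)^l cos(ωs) ds = (√π · Γ(l+1)/(2 Γ(l+3/2))) · √x · ω^{-(l+1/2)} · J_{l+1/2}(ωx), where J_ν(y) := Σ_{m=0}^∞ (-1)^m/(m! Γ(m+ν+1)) · (y/2)^{2m+ν} is the Bessel function of the first kind of order ν defined by its convergent power series. -/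
/-!
Expand `cos (ω * s)` in its Taylor series and integrate term by term against `(x ^ 2 - s ^ 2) ^ l`,
which is integrable on `[0, x]` for `-1 < l`. The substitution `t = s ^ 2` turns the even moments of
this weight into beta integrals, and Legendre's duplication formula for `Γ (m + 1 / 2)` turns the
coefficients `1 / (2 * m)!` of the cosine into the factors `1 / (4 ^ m * m!)` of the Bessel series.
-/

section PoissonIntegral

open MeasureTheory ProbabilityTheory Real Set

lemma integral_rpow_mul_sub_rpow {u v a : ℝ} (hu : 0 < u) (hv : 0 < v) (ha : 0 < a) :
    ∫ t in (0 : ℝ)..a, t ^ (u - 1) * (a - t) ^ (v - 1) = a ^ (u + v - 1) * beta u v := by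
  have complex_integral := Complex.betaIntegral_scaled (u : ℂ) (v : ℂ) ha
  have integrand_ofReal : ∀ t ∈ uIcc 0 a,
      (t : ℂ) ^ ((u : ℂ) - 1) * ((a : ℂ) - t) ^ ((v : ℂ) - 1) =
        ((t ^ (u - 1) * (a - t) ^ (v - 1) : ℝ) : ℂ) := by
    intro t ht
    rw [uIcc_of_le ha.le] at ht
    rw [Complex.ofReal_mul, Complex.ofReal_cpow ht.1, Complex.ofReal_cpow (sub_nonneg.2 ht.2)]
    push_cast
    rfl
  rw [intervalIntegral.integral_congr integrand_ofReal, intervalIntegral.integral_ofReal,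
    Complex.betaIntegral_eq_Gamma_mul_div _ _ (by simpa using hu) (by simpa using hv),
    ← Complex.ofReal_add, Complex.Gamma_ofReal, Complex.Gamma_ofReal, Complex.Gamma_ofReal,
    ← Complex.ofReal_one, ← Complex.ofReal_sub, ← Complex.ofReal_cpow ha.le] at complex_integral
  exact_mod_cast complex_integral

lemma intervalIntegral_comp_rpow {E : Type*} [NormedAddCommGroup E] [NormedSpace ℝ E]
    (g : ℝ → E) {p a : ℝ} (hp : 0 < p) (ha : 0 ≤ a) :
    ∫ x in (0 : ℝ)..a, (p * x ^ (p - 1)) • g (x ^ p) = ∫ y in (0 : ℝ)..a ^ p, g y := by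
  have half_line := integral_comp_rpow_Ioi_of_pos (g := (Iic (a ^ p)).indicator g) hp
  have integrand_eq : ∀ x ∈ Ioi (0 : ℝ), (p * x ^ (p - 1)) • (Iic (a ^ p)).indicator g (x ^ p) =
      (Iic a).indicator (fun x => (p * x ^ (p - 1)) • g (x ^ p)) x := by
    intro x hx
    have mem_iff : x ^ p ∈ Iic (a ^ p) ↔ x ∈ Iic a := rpow_le_rpow_iff (le_of_lt hx) ha hp
    by_cases hxa : x ∈ Iic a
    · rw [indicator_of_mem (mem_iff.2 hxa), indicator_of_mem hxa]
    · rw [indicator_of_notMem (mem_iff.not.2 hxa), indicator_of_notMem hxa, smul_zero]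
  rwa [setIntegral_congr_fun measurableSet_Ioi integrand_eq,
    setIntegral_indicator measurableSet_Iic, setIntegral_indicator measurableSet_Iic,
    Ioi_inter_Iic, Ioi_inter_Iic, ← intervalIntegral.integral_of_le ha,
    ← intervalIntegral.integral_of_le (rpow_nonneg ha p)] at half_line

lemma integral_sq_sub_sq_rpow_mul_pow {l x : ℝ} (hl : -1 < l) (hx : 0 < x) (n : ℕ) :
    ∫ s in (0 : ℝ)..x, (x ^ 2 - s ^ 2) ^ l * s ^ n =
      x ^ (2 * l + n + 1) / 2 * beta ((n + 1) / 2) (l + 1) := by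
  have substitution := intervalIntegral_comp_rpow
    (fun t => t ^ (((n : ℝ) + 1) / 2 - 1) * (x ^ 2 - t) ^ (l + 1 - 1)) two_pos hx.le
  have integrand_eq : ∀ s ∈ Ioo 0 x,
      (2 * s ^ ((2 : ℝ) - 1)) • ((s ^ (2 : ℝ)) ^ (((n : ℝ) + 1) / 2 - 1) *
        (x ^ 2 - s ^ (2 : ℝ)) ^ (l + 1 - 1)) = 2 * ((x ^ 2 - s ^ 2) ^ l * s ^ n) := by
    intro s hs
    have pow_split : s ^ n = s ^ ((2 : ℝ) - 1) * (s ^ (2 : ℝ)) ^ (((n : ℝ) + 1) / 2 - 1) := by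
      rw [← rpow_mul hs.1.le, ← rpow_add hs.1, ← rpow_natCast]
      congr 1
      ring
    rw [pow_split, rpow_two, add_sub_cancel_right, smul_eq_mul]
    ring
  have pow_eq : (x ^ 2) ^ (((n : ℝ) + 1) / 2 + (l + 1) - 1) = x ^ (2 * l + n + 1) := by
    rw [← rpow_two, ← rpow_mul hx.le]
    congr 1
    ring
  rw [intervalIntegral.integral_congr_Ioo_of_le hx.le integrand_eq,
    intervalIntegral.integral_const_mul, rpow_two,
    integral_rpow_mul_sub_rpow (by positivity) (by linarith) (by positivity),
    pow_eq] at substitution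
  linarith

lemma intervalIntegrable_sq_sub_sq_rpow {l x : ℝ} (hl : -1 < l) (hx : 0 < x) :
    IntervalIntegrable (fun s : ℝ => (x ^ 2 - s ^ 2) ^ l) volume 0 x := by
  -- The integral of a non-integrable function is `0` by convention.
  refine intervalIntegral.intervalIntegrable_of_integral_ne_zero ?_
  have total_mass := integral_sq_sub_sq_rpow_mul_pow hl hx 0
  simp only [pow_zero, mul_one] at total_mass
  rw [total_mass]
  have := beta_pos (α := ((0 : ℕ) + 1) / 2) (β := l + 1) (by norm_num) (by linarith)
  positivity

lemma Gamma_natCast_add_half (m : ℕ) :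
    Gamma (m + 1 / 2) = (2 * m).factorial * √π / (4 ^ m * m.factorial) := by
  have duplication := Gamma_mul_Gamma_add_half ((m : ℝ) + 1 / 2)
  have two_rpow : (2 : ℝ) ^ (1 - (((2 * m : ℕ) : ℝ) + 1)) = (4 ^ m)⁻¹ := by
    rw [show 1 - (((2 * m : ℕ) : ℝ) + 1) = -(2 * m : ℕ) by ring, rpow_neg two_pos.le,
      rpow_natCast, pow_mul]
    norm_num
  rw [show (m : ℝ) + 1 / 2 + 1 / 2 = m + 1 by ring, Gamma_nat_eq_factorial,
    show 2 * ((m : ℝ) + 1 / 2) = (2 * m : ℕ) + 1 by push_cast; ring,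
    Gamma_nat_eq_factorial, two_rpow] at duplication
  field_simp at duplication ⊢
  linear_combination duplication

lemma hasSum_intervalIntegral_smul {ι E : Type*} [Countable ι] [NormedAddCommGroup E]
    [NormedSpace ℝ E] {μ : Measure ℝ} {a b : ℝ} {w : ℝ → ℝ} {g : ι → ℝ → E} {f : ℝ → E}
    {c : ι → ℝ} (hw : IntervalIntegrable w μ a b)
    (hg : ∀ i, AEStronglyMeasurable (g i) (μ.restrict (uIoc a b)))
    (hgc : ∀ i, ∀ s ∈ uIoc a b, ‖g i s‖ ≤ c i) (hc : Summable c)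
    (hf : ∀ s ∈ uIoc a b, HasSum (fun i => g i s) (f s)) :
    HasSum (fun i => ∫ s in a..b, w s • g i s ∂μ) (∫ s in a..b, w s • f s ∂μ) := by
  refine intervalIntegral.hasSum_integral_of_dominated_convergence
    (bound := fun i s => ‖w s‖ * c i)
    (fun i => hw.def'.aestronglyMeasurable.smul (hg i))
    (fun i => .of_forall fun s hs => ?_) (.of_forall fun s _ => hc.mul_left _) ?_
    (.of_forall fun s hs => (hf s hs).const_smul _)
  · rw [norm_smul]
    exact mul_le_mul_of_nonneg_left (hgc i s hs) (norm_nonneg _)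
  · simp_rw [tsum_mul_left]
    exact hw.norm.mul_const _

lemma hasSum_integral_mul_cos {μ : Measure ℝ} {w : ℝ → ℝ} {x : ℝ}
    (hw : IntervalIntegrable w μ 0 x) (ω : ℝ) :
    HasSum (fun m : ℕ => (-1) ^ m * ω ^ (2 * m) / (2 * m).factorial *
        ∫ s in (0 : ℝ)..x, w s * s ^ (2 * m) ∂μ)
      (∫ s in (0 : ℝ)..x, w s * cos (ω * s) ∂μ) := by
  have term_norm_le : ∀ m : ℕ, ∀ s ∈ uIoc 0 x,
      ‖(-1) ^ m * (ω * s) ^ (2 * m) / ((2 * m).factorial : ℝ)‖ ≤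
        (ω * x) ^ (2 * m) / (2 * m).factorial := by
    intro m s hs
    have abs_s_le : |s| ≤ |x| := by
      simpa using abs_sub_left_of_mem_uIcc (uIoc_subset_uIcc hs)
    rw [norm_div, norm_mul, norm_pow, norm_neg, norm_one, one_pow, one_mul, norm_natCast,
      norm_of_nonneg (even_two_mul m |>.pow_nonneg _), mul_pow, mul_pow,
      ← (even_two_mul m).pow_abs s, ← (even_two_mul m).pow_abs x]
    have := (even_two_mul m).pow_nonneg ω
    gcongr
  have termwise := hasSum_intervalIntegral_smul hw
    (fun m => Measurable.aestronglyMeasurable (by fun_prop)) term_norm_le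
    (hasSum_cosh (ω * x)).summable (fun s _ => hasSum_cos (ω * s))
  refine termwise.congr_fun fun m => ?_
  rw [← intervalIntegral.integral_const_mul]
  congr 1 with s
  rw [smul_eq_mul, mul_pow]
  ring

lemma hasSum_integral_sq_sub_sq_rpow_mul_cos {l x : ℝ} (hl : -1 < l) (hx : 0 < x) (ω : ℝ) :
    HasSum (fun m : ℕ => √π * Gamma (l + 1) / 2 * x ^ (2 * l + 1) *
        ((-1) ^ m / (m.factorial * Gamma (m + (l + 1 / 2) + 1)) * (ω * x / 2) ^ (2 * m)))
      (∫ s in (0 : ℝ)..x, (x ^ 2 - s ^ 2) ^ l * cos (ω * s)) := by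
  refine (hasSum_integral_mul_cos (intervalIntegrable_sq_sub_sq_rpow hl hx) ω).congr_fun
    fun m => ?_
  have pow_split : x ^ (2 * l + (2 * m : ℕ) + 1) = x ^ (2 * l + 1) * x ^ (2 * m) := by
    rw [← rpow_natCast x, ← rpow_add hx]
    ring_nf
  rw [integral_sq_sub_sq_rpow_mul_pow hl hx, pow_split, beta,
    show (((2 * m : ℕ) : ℝ) + 1) / 2 = m + 1 / 2 by push_cast; ring,
    show (m : ℝ) + 1 / 2 + (l + 1) = m + (l + 1 / 2) + 1 by ring, Gamma_natCast_add_half,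
    div_pow, mul_pow, pow_mul 2 2 m]
  field_simp
  norm_num

/-- The Bessel function of the first kind `J_ν`, given by its power series. As `(y / 2) ^ (2m + ν)`
is a real power, this is the usual function on `0 < y` only. -/
noncomputable def besselJ (ν y : ℝ) : ℝ :=
  ∑' m : ℕ, (-1 : ℝ) ^ m / ((m.factorial : ℝ) * Gamma ((m : ℝ) + ν + 1)) *
    (y / 2) ^ (2 * (m : ℝ) + ν)

lemma besselJ_eq_rpow_mul_tsum (ν : ℝ) {y : ℝ} (hy : 0 < y) :
    besselJ ν y = (y / 2) ^ ν *
      ∑' m : ℕ, (-1) ^ m / (m.factorial * Gamma (m + ν + 1)) * (y / 2) ^ (2 * m) := by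
  rw [besselJ, ← tsum_mul_left]
  refine tsum_congr fun m => ?_
  rw [rpow_add (half_pos hy), show (2 * (m : ℝ)) = (2 * m : ℕ) by push_cast; rfl, rpow_natCast]
  ring

lemma integral_sq_sub_sq_rpow_mul_cos {l ω x : ℝ} (hl : -1 < l) (hω : 0 < ω) (hx : 0 < x) :
    ∫ s in (0 : ℝ)..x, (x ^ 2 - s ^ 2) ^ l * cos (ω * s) =
      √π * Gamma (l + 1) / 2 * (2 * x / ω) ^ (l + 1 / 2) * besselJ (l + 1 / 2) (ω * x) := by
  have rpow_eq : (2 * x / ω) ^ (l + 1 / 2) * (ω * x / 2) ^ (l + 1 / 2) = x ^ (2 * l + 1) := by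
    rw [← mul_rpow (by positivity) (by positivity),
      show 2 * x / ω * (ω * x / 2) = x ^ (2 : ℝ) by rw [rpow_two]; field_simp, ← rpow_mul hx.le]
    ring_nf
  rw [← (hasSum_integral_sq_sub_sq_rpow_mul_cos hl hx ω).tsum_eq, tsum_mul_left, ← rpow_eq,
    besselJ_eq_rpow_mul_tsum _ (by positivity)]
  ring

theorem stmt_3_general {l ω x : ℝ} (hl : -1 < l) (hω : 0 < ω) (hx : 0 < x) :
    x ^ (-l) / (2 ^ (l + 1 / 2) * Gamma (l + 3 / 2)) *
        ∫ s in (0 : ℝ)..x, (x ^ 2 - s ^ 2) ^ l * cos (ω * s) =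
      √π * Gamma (l + 1) / (2 * Gamma (l + 3 / 2)) * √x * ω ^ (-(l + 1 / 2)) *
        besselJ (l + 1 / 2) (ω * x) := by
  have sqrt_eq : √x = x ^ (-l) * x ^ (l + 1 / 2) := by
    rw [sqrt_eq_rpow, ← rpow_add hx]
    ring_nf
  rw [integral_sq_sub_sq_rpow_mul_cos hl hω hx, div_rpow (by positivity) hω.le,
    mul_rpow two_pos.le hx.le, rpow_neg hω.le, sqrt_eq]
  field_simp

end PoissonIntegral

/-- Poisson-type representation: `Y_l[cos(ω·)](x)` equals
`(√π Γ(l+1)/(2Γ(l+3/2))) √x ω^{-(l+1/2)} J_{l+1/2}(ωx)`, with the Bessel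
function of the first kind given by its power series. -/
theorem stmt_3 (l ω : ℝ) (hl : -(1/2) ≤ l) (hω : 0 < ω) (x : ℝ) (hx : 0 < x) :
    x ^ (-l) / (2 ^ (l + 1/2) * Real.Gamma (l + 3/2)) *
        ∫ s in (0:ℝ)..x, (x ^ 2 - s ^ 2) ^ l * Real.cos (ω * s) =
      Real.sqrt Real.pi * Real.Gamma (l + 1) / (2 * Real.Gamma (l + 3/2)) * Real.sqrt x *
          ω ^ (-(l + 1/2)) *
        ∑' m : ℕ, (-1 : ℝ) ^ m / ((m.factorial : ℝ) * Real.Gamma ((m : ℝ) + (l + 1/2) + 1)) *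
          (ω * x / 2) ^ (2 * (m : ℝ) + (l + 1/2)) :=
  stmt_3_general (by linarith) hω hx
end

section
/- Let b > 0 and let l ≥ -1/2 be real. Then: (i) for every continuous f on [0,b], the function Y_l f (with (Y_l f)(0) := 0) is continuous on [0,b] and satisfies |(Y_l f)(x)| ≤ (√π · Γ(l+1)/(2^{l+3/2} Γ(l+3/2)²)) · x^{l+1} · sup_{[0,b]}|f| for all x ∈ [0,b]; in particular Y_l is a bounded linear operator from C([0,b]) to C([0,b]). (ii) If moreover l ≥ 0, there exists a constant M (depending only on l and b) such that for every f ∈ C¹([0,b]), the derivative (Y_l f)' extends continuously to [0,b] and sup_{[0,b]}|(Y_l f)'| ≤ M·(sup_{[0,b]}|f| + sup_{[0,b]}|f'|). -/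
/-! Substituting `s = t * x` turns `Y_l` into `x ^ (l + 1) / c` times an average of the dilations
`f (t * x)`, `0 ≤ t ≤ 1`, against the fixed weight `(1 - t ^ 2) ^ l`. The singularity of the
kernel then no longer depends on `x`, so continuity and differentiability in `x` follow by
dominated convergence, and the constant in the bound is the total mass of the weight, a beta
integral. -/

open MeasureTheory Set
open scoped Pointwise

section BetaIntegral

lemma ofReal_rpow_mul_one_sub_rpow {p q u : ℝ} (hu : u ∈ Icc (0 : ℝ) 1) :
    ((u ^ (p - 1) * (1 - u) ^ (q - 1) : ℝ) : ℂ) =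
      (u : ℂ) ^ ((p : ℂ) - 1) * (1 - (u : ℂ)) ^ ((q : ℂ) - 1) := by
  push_cast [Complex.ofReal_cpow hu.1, Complex.ofReal_cpow (sub_nonneg.2 hu.2)]
  rfl

lemma intervalIntegrable_rpow_mul_one_sub_rpow {p q : ℝ} (hp : 0 < p) (hq : 0 < q) :
    IntervalIntegrable (fun u : ℝ => u ^ (p - 1) * (1 - u) ^ (q - 1)) volume 0 1 := by
  have hbeta := Complex.betaIntegral_convergent (u := p) (v := q) (by simpa) (by simpa)
  rw [intervalIntegrable_iff_integrableOn_Icc_of_le zero_le_one] at hbeta ⊢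
  exact (hbeta.congr_fun (fun u hu => (ofReal_rpow_mul_one_sub_rpow hu).symm)
    measurableSet_Icc).re

lemma integral_rpow_mul_one_sub_rpow {p q : ℝ} (hp : 0 < p) (hq : 0 < q) :
    ∫ u in (0 : ℝ)..1, u ^ (p - 1) * (1 - u) ^ (q - 1) =
      Real.Gamma p * Real.Gamma q / Real.Gamma (p + q) := by
  have hbeta : Complex.betaIntegral p q =
      ((∫ u in (0 : ℝ)..1, u ^ (p - 1) * (1 - u) ^ (q - 1) : ℝ) : ℂ) := by
    rw [Complex.betaIntegral, ← intervalIntegral.integral_ofReal]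
    refine intervalIntegral.integral_congr fun u hu => ?_
    rw [uIcc_of_le zero_le_one] at hu
    exact (ofReal_rpow_mul_one_sub_rpow hu).symm
  rw [← Complex.ofReal_re (∫ u in (0 : ℝ)..1, _), ← hbeta,
    ← ProbabilityTheory.beta_eq_betaIntegralReal p q hp hq, ProbabilityTheory.beta]

end BetaIntegral

section GegenbauerWeight

/-- The Gegenbauer weight `(1 - t²)^l` on `[-1, 1]`, against which `Y_l` averages dilations. -/
noncomputable def gegenbauerWeight (l t : ℝ) : ℝ :=
  (1 - t ^ 2) ^ l

lemma gegenbauerWeight_nonneg (l : ℝ) {t : ℝ} (ht : t ∈ Icc (0 : ℝ) 1) :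
    0 ≤ gegenbauerWeight l t :=
  Real.rpow_nonneg (sub_nonneg.2 (pow_le_one₀ ht.1 ht.2)) l

lemma image_sq_Ioo_zero_one : (fun t : ℝ => t ^ 2) '' Ioo 0 1 = Ioo 0 1 := by
  ext u
  constructor
  · rintro ⟨t, ht, rfl⟩
    exact ⟨pow_pos ht.1 2, pow_lt_one₀ ht.1.le ht.2 two_ne_zero⟩
  · intro hu
    exact ⟨√u, ⟨Real.sqrt_pos.2 hu.1, (Real.sqrt_lt' one_pos).2 (by simpa using hu.2)⟩,
      Real.sq_sqrt hu.1.le⟩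

lemma injOn_sq_Ioo_zero_one : InjOn (fun t : ℝ => t ^ 2) (Ioo 0 1) :=
  fun _ hs _ ht => (pow_left_inj₀ hs.1.le ht.1.le two_ne_zero).1

lemma hasDerivWithinAt_sq (s : Set ℝ) (t : ℝ) : HasDerivWithinAt (fun t => t ^ 2) (2 * t) s t := by
  simpa using (hasDerivAt_pow 2 t).hasDerivWithinAt

-- The right-hand side is the beta integrand with parameters `1 / 2` and `l + 1`, pulled back along
-- `u = t ^ 2`.
lemma two_mul_gegenbauerWeight (l : ℝ) {t : ℝ} (ht : 0 < t) :
    2 * gegenbauerWeight l t =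
      |2 * t| • ((t ^ 2) ^ ((1 / 2 : ℝ) - 1) * (1 - t ^ 2) ^ (l + 1 - 1)) := by
  have hsq : (t ^ 2) ^ ((1 / 2 : ℝ) - 1) = t⁻¹ := by
    rw [← Real.rpow_natCast_mul ht.le, ← Real.rpow_neg_one]
    norm_num
  rw [hsq, abs_of_pos (by positivity), gegenbauerWeight, add_sub_cancel_right, smul_eq_mul]
  field_simp

lemma intervalIntegrable_gegenbauerWeight {l : ℝ} (hl : -1 < l) :
    IntervalIntegrable (gegenbauerWeight l) volume 0 1 := by
  have hbeta := intervalIntegrable_rpow_mul_one_sub_rpow one_half_pos (neg_lt_iff_pos_add.1 hl)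
  rw [intervalIntegrable_iff_integrableOn_Ioo_of_le zero_le_one] at hbeta ⊢
  rw [← image_sq_Ioo_zero_one, integrableOn_image_iff_integrableOn_abs_deriv_smul measurableSet_Ioo
    (fun t _ => hasDerivWithinAt_sq _ t) injOn_sq_Ioo_zero_one] at hbeta
  have htwo := hbeta.congr_fun (fun t ht => (two_mul_gegenbauerWeight l ht.1).symm)
    measurableSet_Ioo
  simpa [IntegrableOn] using htwo.const_mul 2⁻¹

lemma integral_gegenbauerWeight {l : ℝ} (hl : -1 < l) :
    ∫ t in (0 : ℝ)..1, gegenbauerWeight l t =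
      √Real.pi * Real.Gamma (l + 1) / (2 * Real.Gamma (l + 3 / 2)) := by
  have hbeta := integral_rpow_mul_one_sub_rpow one_half_pos (neg_lt_iff_pos_add.1 hl)
  have hsubst : ∫ u in (0 : ℝ)..1, u ^ ((1 / 2 : ℝ) - 1) * (1 - u) ^ (l + 1 - 1) =
      2 * ∫ t in (0 : ℝ)..1, gegenbauerWeight l t := by
    simp only [intervalIntegral.integral_of_le zero_le_one, integral_Ioc_eq_integral_Ioo]
    rw [← image_sq_Ioo_zero_one, integral_image_eq_integral_abs_deriv_smul measurableSet_Ioo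
      (fun t _ => hasDerivWithinAt_sq _ t) injOn_sq_Ioo_zero_one, image_sq_Ioo_zero_one,
      ← integral_const_mul]
    exact setIntegral_congr_fun measurableSet_Ioo
      fun t ht => (two_mul_gegenbauerWeight l ht.1).symm
  rw [hsubst, Real.Gamma_one_half_eq, show 1 / 2 + (l + 1) = l + 3 / 2 by ring] at hbeta
  rw [mul_comm 2 (Real.Gamma _), ← div_div, ← hbeta, mul_div_cancel_left₀ _ two_ne_zero]

end GegenbauerWeight

section DilationAverage

variable {V E : Type*} [AddCommGroup V] [Module ℝ V] [NormedAddCommGroup E] [NormedSpace ℝ E]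

/-- The average `∫₀¹ w(t) g(t x) dt` of the dilations of `g` by factors in `[0, 1]` with
weight `w` (a Hausdorff operator applied to `g`). -/
noncomputable def dilationAverage (w : ℝ → ℝ) (g : V → E) (x : V) : E :=
  ∫ t in (0 : ℝ)..1, w t • g (t • x)

lemma norm_dilationAverage_le {K : Set V} (hK : StarConvex ℝ 0 K) {w : ℝ → ℝ}
    (hw : IntervalIntegrable w volume 0 1) (hw0 : ∀ t ∈ Icc (0 : ℝ) 1, 0 ≤ w t) {g : V → E} {C : ℝ}
    (hC : ∀ y ∈ K, ‖g y‖ ≤ C) {x : V} (hx : x ∈ K) :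
    ‖dilationAverage w g x‖ ≤ (∫ t in (0 : ℝ)..1, w t) * C := by
  rw [← intervalIntegral.integral_mul_const]
  refine intervalIntegral.norm_integral_le_of_norm_le zero_le_one
    (.of_forall fun t ht => ?_) (hw.mul_const C)
  rw [norm_smul, Real.norm_of_nonneg (hw0 t (Ioc_subset_Icc_self ht))]
  exact mul_le_mul_of_nonneg_left (hC _ (hK.smul_mem hx ht.1.le ht.2))
    (hw0 t (Ioc_subset_Icc_self ht))

variable [TopologicalSpace V] [ContinuousSMul ℝ V]

lemma intervalIntegrable_smul_comp_smul {K : Set V} (hK : StarConvex ℝ 0 K) {w : ℝ → ℝ}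
    (hw : IntervalIntegrable w volume 0 1) {g : V → E} (hg : ContinuousOn g K) {x : V}
    (hx : x ∈ K) : IntervalIntegrable (fun t => w t • g (t • x)) volume 0 1 := by
  refine hw.smul_continuousOn ?_
  rw [uIcc_of_le zero_le_one]
  exact hg.comp (by fun_prop) fun t ht => hK.smul_mem hx ht.1 ht.2

lemma continuousOn_dilationAverage [FirstCountableTopology V] {K : Set V} (hKc : IsCompact K)
    (hK : StarConvex ℝ 0 K) {w : ℝ → ℝ} (hw : IntervalIntegrable w volume 0 1) {g : V → E}
    (hg : ContinuousOn g K) : ContinuousOn (dilationAverage w g) K := by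
  obtain ⟨C, hC⟩ := hKc.exists_bound_of_continuousOn hg
  intro x hx
  refine intervalIntegral.continuousWithinAt_of_dominated_interval
    (bound := fun t => ‖w t‖ * C) ?measurable ?bound (hw.norm.mul_const C) ?continuous
  case measurable =>
    filter_upwards [self_mem_nhdsWithin] with y hy
    exact (intervalIntegrable_smul_comp_smul hK hw hg hy).def'.aestronglyMeasurable
  case bound =>
    filter_upwards [self_mem_nhdsWithin] with y hy
    refine .of_forall fun t ht => ?_
    rw [uIoc_of_le zero_le_one] at ht
    rw [norm_smul]
    exact mul_le_mul_of_nonneg_left (hC _ (hK.smul_mem hy ht.1.le ht.2)) (norm_nonneg _)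
  case continuous =>
    refine .of_forall fun t ht => ?_
    rw [uIoc_of_le zero_le_one] at ht
    have hdil : ContinuousOn (fun y => g (t • y)) K :=
      hg.comp (by fun_prop) fun y hy => hK.smul_mem hy ht.1.le ht.2
    exact (hdil x hx).const_smul (w t)

lemma smul_mem_interior_of_starConvex {K : Set V} (hK : StarConvex ℝ 0 K) {x : V}
    (hx : x ∈ interior K) {t : ℝ} (ht : t ∈ Ioc (0 : ℝ) 1) : t • x ∈ interior K := by
  have hsub : t • K ⊆ K := by
    rintro _ ⟨y, hy, rfl⟩
    exact hK.smul_mem hy ht.1.le ht.2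
  refine interior_mono hsub ?_
  rw [interior_smul₀ ht.1.ne']
  exact smul_mem_smul_set hx

lemma hasDerivAt_dilationAverage {K : Set ℝ} (hKc : IsCompact K) (hK : StarConvex ℝ 0 K)
    {w : ℝ → ℝ} (hw : IntervalIntegrable w volume 0 1) {f f' : ℝ → E} (hfc : ContinuousOn f K)
    (hf : ∀ y ∈ interior K, HasDerivAt f (f' y) y) (hf' : ContinuousOn f' K) {x : ℝ}
    (hx : x ∈ interior K) :
    HasDerivAt (dilationAverage w f) (dilationAverage (fun t => w t * t) f' x) x := by
  have hwt : IntervalIntegrable (fun t => w t * t) volume 0 1 :=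
    hw.mul_continuousOn continuousOn_id
  obtain ⟨C, hC⟩ := hKc.exists_bound_of_continuousOn hf'
  have hnhds : interior K ∈ nhds x := isOpen_interior.mem_nhds hx
  refine (intervalIntegral.hasDerivAt_integral_of_dominated_loc_of_deriv_le
    (F := fun y t => w t • f (t • y)) (F' := fun y t => (w t * t) • f' (t • y))
    (bound := fun t => ‖w t * t‖ * C) hnhds ?measurable
    (intervalIntegrable_smul_comp_smul hK hw hfc (interior_subset hx))
    (intervalIntegrable_smul_comp_smul hK hwt hf' (interior_subset hx)).def'.aestronglyMeasurable
    ?bound (hwt.norm.mul_const C) ?deriv).2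
  case measurable =>
    filter_upwards [hnhds] with y hy
    exact (intervalIntegrable_smul_comp_smul hK hw hfc
      (interior_subset hy)).def'.aestronglyMeasurable
  case bound =>
    refine .of_forall fun t ht y hy => ?_
    rw [uIoc_of_le zero_le_one] at ht
    rw [norm_smul]
    exact mul_le_mul_of_nonneg_left
      (hC _ (hK.smul_mem (interior_subset hy) ht.1.le ht.2)) (norm_nonneg _)
  case deriv =>
    refine .of_forall fun t ht y hy => ?_
    rw [uIoc_of_le zero_le_one] at ht
    have hdil : HasDerivAt (fun y : ℝ => t • y) t y := hasDerivAt_const_mul t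
    have hcomp : HasDerivAt (fun y => f (t • y)) (t • f' (t • y)) y :=
      (hf _ (smul_mem_interior_of_starConvex hK hy ht)).scomp y hdil
    exact mul_smul (w t) t (f' (t • y)) ▸ hcomp.const_smul (w t)

end DilationAverage

section PoissonTransform

variable {E : Type*} [NormedAddCommGroup E] [NormedSpace ℝ E]

/-- The normalising constant `2^(l + 1/2) Γ(l + 3/2)` of the operator `Y_l`. -/
noncomputable def poissonTransformConst (l : ℝ) : ℝ :=
  2 ^ (l + 1 / 2) * Real.Gamma (l + 3 / 2)

/-- The Poisson-type transmutation operator `Y_l`, here on functions with values in a normed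
space. The prescribed value `(Y_l f)(0) = 0` comes for free, because the integral over `[0, 0]`
vanishes whatever value Lean assigns to `0 ^ (-l)`. -/
noncomputable def poissonTransform (l : ℝ) (f : ℝ → E) (x : ℝ) : E :=
  (x ^ (-l) / poissonTransformConst l) • ∫ s in (0 : ℝ)..x, (x ^ 2 - s ^ 2) ^ l • f s

/-- The derivative of `poissonTransform l f`, where `f'` is the derivative of `f`, in a form that
is continuous up to `0` when `0 ≤ l`. -/
noncomputable def poissonTransformDeriv (l : ℝ) (f f' : ℝ → E) (x : ℝ) : E :=
  ((l + 1) * x ^ l / poissonTransformConst l) • dilationAverage (gegenbauerWeight l) f x +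
    (x ^ (l + 1) / poissonTransformConst l) •
      dilationAverage (fun t => gegenbauerWeight l t * t) f' x

lemma poissonTransformConst_pos {l : ℝ} (hl : -(3 / 2) < l) : 0 < poissonTransformConst l :=
  mul_pos (by positivity) (Real.Gamma_pos_of_pos (by linarith))

lemma starConvex_zero_Icc (b : ℝ) : StarConvex ℝ 0 (Icc 0 b) :=
  starConvex_zero_iff.2 fun _ hx _ ht0 ht1 =>
    ⟨mul_nonneg ht0 hx.1, (mul_le_of_le_one_left hx.1 ht1).trans hx.2⟩

lemma rpow_sq_sub_sq_mul {l x t : ℝ} (hx : 0 ≤ x) (ht : t ∈ Icc (0 : ℝ) 1) :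
    (x ^ 2 - (t * x) ^ 2) ^ l = x ^ (2 * l) * gegenbauerWeight l t := by
  rw [gegenbauerWeight, show x ^ 2 - (t * x) ^ 2 = x ^ 2 * (1 - t ^ 2) by ring,
    Real.mul_rpow (sq_nonneg x) (sub_nonneg.2 (pow_le_one₀ ht.1 ht.2)), Real.rpow_mul hx,
    Real.rpow_two]

lemma integral_rpow_sq_sub_sq_smul (l : ℝ) (f : ℝ → E) {x : ℝ} (hx : 0 ≤ x) :
    ∫ s in (0 : ℝ)..x, (x ^ 2 - s ^ 2) ^ l • f s =
      (x * x ^ (2 * l)) • dilationAverage (gegenbauerWeight l) f x := by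
  have hsubst := intervalIntegral.smul_integral_comp_mul_right (a := 0) (b := 1)
    (fun s => (x ^ 2 - s ^ 2) ^ l • f s) x
  rw [zero_mul, one_mul] at hsubst
  have hscale : ∫ t in (0 : ℝ)..1, (x ^ 2 - (t * x) ^ 2) ^ l • f (t * x) =
      x ^ (2 * l) • dilationAverage (gegenbauerWeight l) f x := by
    rw [dilationAverage, ← intervalIntegral.integral_smul]
    refine intervalIntegral.integral_congr fun t ht => ?_
    rw [uIcc_of_le zero_le_one] at ht
    simp only [rpow_sq_sub_sq_mul hx ht, mul_smul, smul_eq_mul]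
  rw [← hsubst, hscale, mul_smul]

lemma poissonTransform_eq_smul_dilationAverage {l : ℝ} (hl : -1 < l) (f : ℝ → E) {x : ℝ}
    (hx : 0 ≤ x) :
    poissonTransform l f x = (x ^ (l + 1) / poissonTransformConst l) •
      dilationAverage (gegenbauerWeight l) f x := by
  rw [poissonTransform, integral_rpow_sq_sub_sq_smul l f hx, smul_smul]
  congr 1
  rcases hx.eq_or_lt with rfl | hx
  · simp [Real.zero_rpow (by linarith : l + 1 ≠ 0)]
  · have hpow : x ^ (l + 1) = x ^ (-l) * (x * x ^ (2 * l)) := by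
      rw [mul_comm x, ← Real.rpow_add_one hx.ne', ← Real.rpow_add hx]
      congr 1; ring
    rw [hpow]; ring

lemma continuousOn_poissonTransform {b l : ℝ} (hl : -1 < l) {f : ℝ → E}
    (hf : ContinuousOn f (Icc 0 b)) : ContinuousOn (poissonTransform l f) (Icc 0 b) := by
  have hprefactor : Continuous fun x : ℝ => x ^ (l + 1) / poissonTransformConst l :=
    (Real.continuous_rpow_const (by linarith)).div_const _
  exact (hprefactor.continuousOn.smul (continuousOn_dilationAverage isCompact_Icc
    (starConvex_zero_Icc b) (intervalIntegrable_gegenbauerWeight hl) hf)).congr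
      fun x hx => poissonTransform_eq_smul_dilationAverage hl f hx.1

lemma norm_poissonTransform_le {b l : ℝ} (hl : -1 < l) {f : ℝ → E} {F : ℝ}
    (hF : ∀ y ∈ Icc 0 b, ‖f y‖ ≤ F) {x : ℝ} (hx : x ∈ Icc 0 b) :
    ‖poissonTransform l f x‖ ≤ √Real.pi * Real.Gamma (l + 1) /
      (2 ^ (l + 3 / 2) * Real.Gamma (l + 3 / 2) ^ 2) * x ^ (l + 1) * F := by
  have hprefactor : 0 ≤ x ^ (l + 1) / poissonTransformConst l :=
    div_nonneg (Real.rpow_nonneg hx.1 _) (poissonTransformConst_pos (by linarith)).le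
  have htwo : (2 : ℝ) ^ (l + 3 / 2) = 2 ^ (l + 1 / 2) * 2 := by
    rw [← Real.rpow_add_one two_ne_zero]
    congr 1; ring
  calc ‖poissonTransform l f x‖
      = x ^ (l + 1) / poissonTransformConst l * ‖dilationAverage (gegenbauerWeight l) f x‖ := by
        rw [poissonTransform_eq_smul_dilationAverage hl f hx.1, norm_smul,
          Real.norm_of_nonneg hprefactor]
    _ ≤ x ^ (l + 1) / poissonTransformConst l * ((∫ t in (0 : ℝ)..1, gegenbauerWeight l t) * F) :=
        mul_le_mul_of_nonneg_left (norm_dilationAverage_le (starConvex_zero_Icc b)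
          (intervalIntegrable_gegenbauerWeight hl) (fun _ => gegenbauerWeight_nonneg l) hF hx)
          hprefactor
    _ = √Real.pi * Real.Gamma (l + 1) /
          (2 ^ (l + 3 / 2) * Real.Gamma (l + 3 / 2) ^ 2) * x ^ (l + 1) * F := by
        rw [integral_gegenbauerWeight hl, htwo, poissonTransformConst]
        ring

lemma intervalIntegrable_gegenbauerWeight_mul_id {l : ℝ} (hl : -1 < l) :
    IntervalIntegrable (fun t => gegenbauerWeight l t * t) volume 0 1 :=
  (intervalIntegrable_gegenbauerWeight hl).mul_continuousOn continuousOn_id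

lemma continuousOn_poissonTransformDeriv {b l : ℝ} (hl : 0 ≤ l) {f f' : ℝ → E}
    (hf : ContinuousOn f (Icc 0 b)) (hf' : ContinuousOn f' (Icc 0 b)) :
    ContinuousOn (poissonTransformDeriv l f f') (Icc 0 b) := by
  have hl1 : -1 < l := by linarith
  have hcoeff : Continuous fun x : ℝ => (l + 1) * x ^ l / poissonTransformConst l :=
    (continuous_const.mul (Real.continuous_rpow_const hl)).div_const _
  have hcoeff' : Continuous fun x : ℝ => x ^ (l + 1) / poissonTransformConst l :=
    (Real.continuous_rpow_const (by linarith)).div_const _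
  exact (hcoeff.continuousOn.smul (continuousOn_dilationAverage isCompact_Icc
    (starConvex_zero_Icc b) (intervalIntegrable_gegenbauerWeight hl1) hf)).add
      (hcoeff'.continuousOn.smul (continuousOn_dilationAverage isCompact_Icc
        (starConvex_zero_Icc b) (intervalIntegrable_gegenbauerWeight_mul_id hl1) hf'))

lemma hasDerivAt_poissonTransform {b l : ℝ} (hl : -1 < l) {f f' : ℝ → E}
    (hfc : ContinuousOn f (Icc 0 b)) (hf : ∀ y ∈ Ioo 0 b, HasDerivAt f (f' y) y)
    (hf' : ContinuousOn f' (Icc 0 b)) {x : ℝ} (hx : x ∈ Ioo 0 b) :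
    HasDerivAt (poissonTransform l f) (poissonTransformDeriv l f f' x) x := by
  have hprefactor : HasDerivAt (fun y : ℝ => y ^ (l + 1) / poissonTransformConst l)
      ((l + 1) * x ^ l / poissonTransformConst l) x := by
    simpa using (Real.hasDerivAt_rpow_const (p := l + 1) (.inl hx.1.ne')).div_const _
  have haverage : HasDerivAt (dilationAverage (gegenbauerWeight l) f)
      (dilationAverage (fun t => gegenbauerWeight l t * t) f' x) x :=
    hasDerivAt_dilationAverage isCompact_Icc (starConvex_zero_Icc b)
      (intervalIntegrable_gegenbauerWeight hl) hfc (by rwa [interior_Icc]) hf'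
      (by rwa [interior_Icc])
  rw [poissonTransformDeriv, add_comm]
  refine (hprefactor.smul haverage).congr_of_eventuallyEq ?_
  filter_upwards [Ioi_mem_nhds hx.1] with y hy
  exact poissonTransform_eq_smul_dilationAverage hl f (le_of_lt hy)

lemma norm_poissonTransformDeriv_le {b l : ℝ} (hl : 0 ≤ l) {f f' : ℝ → E} {F F' : ℝ}
    (hF : ∀ y ∈ Icc 0 b, ‖f y‖ ≤ F) (hF' : ∀ y ∈ Icc 0 b, ‖f' y‖ ≤ F') {x : ℝ}
    (hx : x ∈ Icc 0 b) :
    ‖poissonTransformDeriv l f f' x‖ ≤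
      (l + 1) * b ^ l / poissonTransformConst l * ((∫ t in (0 : ℝ)..1, gegenbauerWeight l t) * F) +
      b ^ (l + 1) / poissonTransformConst l *
        ((∫ t in (0 : ℝ)..1, gegenbauerWeight l t * t) * F') := by
  have hl1 : -1 < l := by linarith
  have hc : 0 < poissonTransformConst l := poissonTransformConst_pos (by linarith)
  have hx0 : 0 ≤ x := hx.1
  have hb0 : 0 ≤ b := hx.1.trans hx.2
  have haverage := norm_dilationAverage_le (starConvex_zero_Icc b)
    (intervalIntegrable_gegenbauerWeight hl1) (fun _ => gegenbauerWeight_nonneg l) hF hx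
  have haverage' := norm_dilationAverage_le (starConvex_zero_Icc b)
    (intervalIntegrable_gegenbauerWeight_mul_id hl1)
    (fun t ht => mul_nonneg (gegenbauerWeight_nonneg l ht) ht.1) hF' hx
  refine (norm_add_le _ _).trans ?_
  rw [norm_smul_of_nonneg (by positivity), norm_smul_of_nonneg (by positivity)]
  gcongr <;> exact hx.2

lemma exists_norm_poissonTransformDeriv_le {l : ℝ} (hl : 0 ≤ l) (b : ℝ) :
    ∃ M : ℝ, ∀ (f f' : ℝ → E) (F F' : ℝ), (∀ y ∈ Icc 0 b, ‖f y‖ ≤ F) →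
      (∀ y ∈ Icc 0 b, ‖f' y‖ ≤ F') →
      ∀ x ∈ Icc 0 b, ‖poissonTransformDeriv l f f' x‖ ≤ M * (F + F') := by
  set A := (l + 1) * b ^ l / poissonTransformConst l * ∫ t in (0 : ℝ)..1, gegenbauerWeight l t
    with hA
  set B := b ^ (l + 1) / poissonTransformConst l * ∫ t in (0 : ℝ)..1, gegenbauerWeight l t * t
    with hB
  refine ⟨max A B, fun f f' F F' hF hF' x hx => ?_⟩
  have hF0 : 0 ≤ F := (norm_nonneg _).trans (hF x hx)
  have hF'0 : 0 ≤ F' := (norm_nonneg _).trans (hF' x hx)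
  calc ‖poissonTransformDeriv l f f' x‖
      ≤ A * F + B * F' := by
        simpa only [hA, hB, mul_assoc] using norm_poissonTransformDeriv_le hl hF hF' hx
    _ ≤ max A B * F + max A B * F' := by
        gcongr
        exacts [le_max_left A B, le_max_right A B]
    _ = max A B * (F + F') := (mul_add _ _ _).symm

theorem stmt_5_general [CompleteSpace E] (b l : ℝ) (hl : -1 < l) :
    (∀ f : ℝ → E, ContinuousOn f (Icc 0 b) →
      ContinuousOn (poissonTransform l f) (Icc 0 b) ∧
      ∀ F : ℝ, (∀ y ∈ Icc 0 b, ‖f y‖ ≤ F) → ∀ x ∈ Icc 0 b,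
        ‖poissonTransform l f x‖ ≤ √Real.pi * Real.Gamma (l + 1) /
          (2 ^ (l + 3 / 2) * Real.Gamma (l + 3 / 2) ^ 2) * x ^ (l + 1) * F) ∧
    (0 ≤ l → ∃ M : ℝ, ∀ f f' : ℝ → E,
      (∀ x ∈ Icc 0 b, HasDerivWithinAt f (f' x) (Icc 0 b) x) →
      ContinuousOn f' (Icc 0 b) →
      ∃ G : ℝ → E, ContinuousOn G (Icc 0 b) ∧
        (∀ x ∈ Ioo 0 b, HasDerivAt (poissonTransform l f) (G x) x) ∧
        ∀ F F' : ℝ, (∀ y ∈ Icc 0 b, ‖f y‖ ≤ F) → (∀ y ∈ Icc 0 b, ‖f' y‖ ≤ F') →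
          ∀ x ∈ Icc 0 b, ‖G x‖ ≤ M * (F + F')) := by
  refine ⟨fun f hf => ⟨continuousOn_poissonTransform hl hf,
    fun F hF x hx => norm_poissonTransform_le hl hF hx⟩, fun hl0 => ?_⟩
  obtain ⟨M, hM⟩ := exists_norm_poissonTransformDeriv_le (E := E) hl0 b
  refine ⟨M, fun f f' hf hf' => ?_⟩
  have hfc : ContinuousOn f (Icc 0 b) := fun y hy => (hf y hy).continuousWithinAt
  have hfd : ∀ y ∈ Ioo 0 b, HasDerivAt f (f' y) y := fun y hy =>
    (hf y (Ioo_subset_Icc_self hy)).hasDerivAt (Icc_mem_nhds hy.1 hy.2)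
  exact ⟨poissonTransformDeriv l f f', continuousOn_poissonTransformDeriv hl0 hfc hf',
    fun x hx => hasDerivAt_poissonTransform hl hfc hfd hf' hx, hM f f'⟩

end PoissonTransform

/-- Mapping properties of `Y_l`: it is a bounded operator on
`C([0,b])` with the explicit bound `|Y_l f(x)| ≤ (√π Γ(l+1)/(2^{l+3/2} Γ(l+3/2)²)) x^{l+1} sup|f|`,
and (for `l ≥ 0`) `f ↦ (Y_l f)'` is a bounded operator from `C¹([0,b])` to `C([0,b])`. -/
theorem stmt_5 (b l : ℝ) (hb : 0 < b) (hl : -(1/2) ≤ l) :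
    (∀ f : ℝ → ℝ, ContinuousOn f (Set.Icc 0 b) →
      (ContinuousOn (fun x : ℝ => x ^ (-l) / (2 ^ (l + 1/2) * Real.Gamma (l + 3/2)) *
          ∫ s in (0:ℝ)..x, (x ^ 2 - s ^ 2) ^ l * f s) (Set.Icc 0 b)) ∧
      ∀ F : ℝ, (∀ y ∈ Set.Icc (0:ℝ) b, |f y| ≤ F) →
        ∀ x ∈ Set.Icc (0:ℝ) b,
          |x ^ (-l) / (2 ^ (l + 1/2) * Real.Gamma (l + 3/2)) *
              ∫ s in (0:ℝ)..x, (x ^ 2 - s ^ 2) ^ l * f s| ≤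
            Real.sqrt Real.pi * Real.Gamma (l + 1) /
                (2 ^ (l + 3/2) * Real.Gamma (l + 3/2) ^ 2) * x ^ (l + 1) * F) ∧
    (0 ≤ l → ∃ M : ℝ, ∀ f f' : ℝ → ℝ,
      (∀ x ∈ Set.Icc (0:ℝ) b, HasDerivWithinAt f (f' x) (Set.Icc 0 b) x) →
      ContinuousOn f' (Set.Icc 0 b) →
      ∃ G : ℝ → ℝ, ContinuousOn G (Set.Icc 0 b) ∧
        (∀ x ∈ Set.Ioo (0:ℝ) b,
          HasDerivAt (fun y : ℝ => y ^ (-l) / (2 ^ (l + 1/2) * Real.Gamma (l + 3/2)) *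
            ∫ s in (0:ℝ)..y, (y ^ 2 - s ^ 2) ^ l * f s) (G x) x) ∧
        ∀ F F' : ℝ, (∀ y ∈ Set.Icc (0:ℝ) b, |f y| ≤ F) →
          (∀ y ∈ Set.Icc (0:ℝ) b, |f' y| ≤ F') →
          ∀ x ∈ Set.Icc (0:ℝ) b, |G x| ≤ M * (F + F')) := by
  exact stmt_5_general b l (by linarith)
end

section
/- Let b > 0, let l ≥ -1/2 be real, and let q : [0,b] → ℂ be continuous. Suppose K is a complex-valued function, twice continuously differentiable on the closed triangle {(x,t) : 0 ≤ t ≤ x ≤ b}, satisfying: (i) ∂²K/∂x² - ∂²K/∂t² - (l(l+1)/x²)K + (l(l+1)/t²)K - q(x)K = 0 for 0 < t ≤ x ≤ b; (ii) d/dx[K(x,x)] = q(x)/2 for x ∈ [0,b]; (iii) K(x,0) = 0 for x ∈ [0,b]. Let φ : [0,b] → ℂ be continuous with φ(0) = 0, twice continuously differentiable on (0,b], such that φ' extends continuously to [0,b] if l ≥ 0, and φ'(t) = O(t^l) as t → 0⁺ if -1/2 ≤ l < 0; assume moreover that for each x ∈ (0,b] the function t ↦ K(x,t)φ''(t) is improperly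 integrable on (0,x]. Define (Tφ)(x) = φ(x) + ∫₀ˣ K(x,t)φ(t) dt. Then for every x ∈ (0,b], Tφ is twice differentiable at x and (Tφ)''(x) - (l(l+1)/x² + q(x))·(Tφ)(x) = φ''(x) - (l(l+1)/x²)φ(x) + ∫₀ˣ K(x,t)·(φ''(t) - (l(l+1)/t²)φ(t)) dt. -/
/-!
Differentiating `∫₀ˣ K(x,t) φ(t) dt` twice gives the boundary terms
`d/dx [K(x,x) φ(x)] + Kₓ(x,x) φ(x)` and the integral of `Kₓₓ φ`. By the wave equation for `K`, what
remains under the integral in `L T φ - T L₀ φ` is `Kₜₜ φ - K φ''`, the derivative in `t` of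
`Kₜ φ - K φ'`. At `t = 0` the latter vanishes because `K(x,t) = O(t)` while `φ'(t) = o(1/t)`. At
`t = x` its value combines with the boundary terms and `-q φ` to
`(d/dx K(x,x) + Kₓ(x,x) + Kₜ(x,x) - q(x)) φ(x)`, which is zero since
`Kₓ(x,x) + Kₜ(x,x) = d/dx K(x,x) = q(x)/2`.
-/

open Set Filter Topology MeasureTheory

/-- The triangle `a ≤ t ≤ x ≤ b`, as a set of pairs `(x, t)`: the domain of a Volterra kernel. -/
def closedTriangle (a b : ℝ) : Set (ℝ × ℝ) := {p | a ≤ p.2 ∧ p.2 ≤ p.1 ∧ p.1 ≤ b}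

section Triangle

variable {E : Type*} [NormedAddCommGroup E] {G Gx : ℝ → ℝ → E} {a b x : ℝ}

theorem isCompact_closedTriangle (a b : ℝ) : IsCompact (closedTriangle a b) := by
  refine (isCompact_Icc (a := ((a, a) : ℝ × ℝ)) (b := (b, b))).of_isClosed_subset ?_
    fun p hp => ⟨⟨hp.1.trans hp.2.1, hp.1⟩, ⟨hp.2.2, hp.2.1.trans hp.2.2⟩⟩
  exact (isClosed_le continuous_const continuous_snd).inter
    ((isClosed_le continuous_snd continuous_fst).inter
      (isClosed_le continuous_fst continuous_const))

theorem closedTriangle_subset_closedTriangle (hx : x ≤ b) :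
    closedTriangle a x ⊆ closedTriangle a b :=
  fun _ hp => ⟨hp.1, hp.2.1, hp.2.2.trans hx⟩

theorem continuousOn_snd_of_closedTriangle
    (hG : ContinuousOn (fun p : ℝ × ℝ => G p.1 p.2) (closedTriangle a b)) (hx : x ≤ b) :
    ContinuousOn (G x) (Icc a x) :=
  hG.comp (f := fun t => (x, t)) (by fun_prop) fun _ ht => ⟨ht.1, ht.2, hx⟩

theorem continuousOn_fst_of_closedTriangle
    (hG : ContinuousOn (fun p : ℝ × ℝ => G p.1 p.2) (closedTriangle a b)) {t : ℝ} (ht : a ≤ t) :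
    ContinuousOn (fun y => G y t) (Icc t b) :=
  hG.comp (f := fun y => (y, t)) (by fun_prop) fun _ hy => ⟨ht, hy.1, hy.2⟩

theorem continuousOn_diag_of_closedTriangle
    (hG : ContinuousOn (fun p : ℝ × ℝ => G p.1 p.2) (closedTriangle a b)) :
    ContinuousOn (fun y => G y y) (Icc a b) :=
  hG.comp (f := fun y => (y, y)) (by fun_prop) fun _ hy => ⟨hy.1, le_rfl, hy.2⟩

variable [NormedSpace ℝ E]

theorem integral_integral_swap_closedTriangle (hax : a ≤ x)
    (hG : IntegrableOn (fun p : ℝ × ℝ => G p.1 p.2) (closedTriangle a x)) :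
    ∫ t in a..x, ∫ y in t..x, G y t = ∫ y in a..x, ∫ t in a..y, G y t := by
  set F : ℝ → ℝ → E := fun y t => (closedTriangle a x).indicator (fun p => G p.1 p.2) (y, t)
  have hF : Integrable (Function.uncurry F) (volume.prod volume) :=
    hG.integrable_indicator (isCompact_closedTriangle a x).measurableSet
  have integral_fst (t : ℝ) :
      ∫ y, F y t = (Icc a x).indicator (fun t => ∫ y in t..x, G y t) t := by
    by_cases ht : t ∈ Icc a x
    · rw [indicator_of_mem ht, intervalIntegral.integral_of_le ht.2, ← integral_Icc_eq_integral_Ioc,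
        ← integral_indicator measurableSet_Icc]
      congr with y
      simp [F, closedTriangle, indicator_apply, ht.1]
    · have hF0 (y : ℝ) : F y t = 0 := indicator_of_notMem
        (fun h => ht ⟨h.1, h.2.1.trans h.2.2⟩) _
      simp only [hF0, integral_zero, indicator_of_notMem ht]
  have integral_snd (y : ℝ) :
      ∫ t, F y t = (Icc a x).indicator (fun y => ∫ t in a..y, G y t) y := by
    by_cases hy : y ∈ Icc a x
    · rw [indicator_of_mem hy, intervalIntegral.integral_of_le hy.1, ← integral_Icc_eq_integral_Ioc,
        ← integral_indicator measurableSet_Icc]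
      congr with t
      simp [F, closedTriangle, indicator_apply, hy.2]
    · have hF0 (t : ℝ) : F y t = 0 := indicator_of_notMem
        (fun h => hy ⟨h.1.trans h.2.1, h.2.2⟩) _
      simp only [hF0, integral_zero, indicator_of_notMem hy]
  have hswap := integral_integral_swap hF
  simp only [integral_fst, integral_snd, integral_indicator measurableSet_Icc,
    integral_Icc_eq_integral_Ioc, ← intervalIntegral.integral_of_le hax] at hswap
  exact hswap.symm

theorem continuousOn_integral_closedTriangle
    (hG : ContinuousOn (fun p : ℝ × ℝ => G p.1 p.2) (closedTriangle a b)) :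
    ContinuousOn (fun y => ∫ t in a..y, G y t) (Icc a b) := by
  rcases lt_or_ge b a with hba | hab
  · simp [Icc_eq_empty hba.not_ge]
  -- Precomposing with a retraction of the plane onto the triangle makes `G` continuous everywhere.
  set r : ℝ × ℝ → ℝ × ℝ := fun p => (max a (min p.1 b), max a (min (min p.2 p.1) b))
  have hr : Continuous fun p => G (r p).1 (r p).2 :=
    hG.comp_continuous (by fun_prop) fun p => ⟨le_max_left _ _,
      max_le_max_left _ (min_le_min_right _ (min_le_right _ _)), max_le hab (min_le_right _ _)⟩
  refine ContinuousOn.congr (f := fun y => ∫ t in a..y, G (r (y, t)).1 (r (y, t)).2)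
    ((intervalIntegral.continuous_parametric_primitive_of_continuous
      (f := fun y t => G (r (y, t)).1 (r (y, t)).2) hr).comp
      (continuous_id.prodMk continuous_id)).continuousOn fun y hy => ?_
  refine intervalIntegral.integral_congr fun t ht => ?_
  rw [uIcc_of_le hy.1] at ht
  have hrt : r (y, t) = (y, t) := by
    simp [r, hy.1, hy.2, ht.1, ht.2, ht.2.trans hy.2]
  simp only [hrt]

theorem integral_eq_integral_diag_add [CompleteSpace E]
    (hG : ContinuousOn (fun p : ℝ × ℝ => G p.1 p.2) (closedTriangle a b))
    (hGx : ∀ x t : ℝ, a ≤ t → t ≤ x → x ≤ b →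
      HasDerivWithinAt (fun y => G y t) (Gx x t) (Icc t b) x)
    (hGxc : ContinuousOn (fun p : ℝ × ℝ => Gx p.1 p.2) (closedTriangle a b))
    (hx : x ∈ Icc a b) :
    ∫ t in a..x, G x t = ∫ y in a..x, (G y y + ∫ t in a..y, Gx y t) := by
  have hdiag : IntervalIntegrable (fun y => G y y) volume a x :=
    ((continuousOn_diag_of_closedTriangle hG).mono
      (Icc_subset_Icc_right hx.2)).intervalIntegrable_of_Icc hx.1
  have hsec : IntervalIntegrable (G x) volume a x :=
    (continuousOn_snd_of_closedTriangle hG hx.2).intervalIntegrable_of_Icc hx.1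
  have hinner : IntervalIntegrable (fun y => ∫ t in a..y, Gx y t) volume a x :=
    ((continuousOn_integral_closedTriangle hGxc).mono
      (Icc_subset_Icc_right hx.2)).intervalIntegrable_of_Icc hx.1
  have hFTC : ∀ t ∈ uIcc a x, ∫ y in t..x, Gx y t = G x t - G t t := fun t ht => by
    rw [uIcc_of_le hx.1] at ht
    have hsub : Icc t x ⊆ Icc t b := Icc_subset_Icc_right hx.2
    refine intervalIntegral.integral_eq_sub_of_hasDerivAt_of_le (f := fun y => G y t) ht.2
      ((continuousOn_fst_of_closedTriangle hG ht.1).mono hsub) (fun y hy => ?_)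
      (((continuousOn_fst_of_closedTriangle hGxc ht.1).mono hsub).intervalIntegrable_of_Icc ht.2)
    have hyb : y < b := hy.2.trans_le hx.2
    exact (hGx y t ht.1 hy.1.le hyb.le).hasDerivAt (Icc_mem_nhds hy.1 hyb)
  have hFubini : ∫ t in a..x, (G x t - G t t) = ∫ y in a..x, ∫ t in a..y, Gx y t := by
    rw [← intervalIntegral.integral_congr hFTC]
    exact integral_integral_swap_closedTriangle hx.1
      ((hGxc.mono (closedTriangle_subset_closedTriangle hx.2)).integrableOn_compact
        (isCompact_closedTriangle a x))
  rw [intervalIntegral.integral_add hdiag hinner, ← hFubini,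
    intervalIntegral.integral_sub hsec hdiag, add_sub_cancel]

theorem hasDerivWithinAt_integral_closedTriangle [CompleteSpace E]
    (hG : ContinuousOn (fun p : ℝ × ℝ => G p.1 p.2) (closedTriangle a b))
    (hGx : ∀ x t : ℝ, a ≤ t → t ≤ x → x ≤ b →
      HasDerivWithinAt (fun y => G y t) (Gx x t) (Icc t b) x)
    (hGxc : ContinuousOn (fun p : ℝ × ℝ => Gx p.1 p.2) (closedTriangle a b))
    (hx : x ∈ Icc a b) :
    HasDerivWithinAt (fun x => ∫ t in a..x, G x t) (G x x + ∫ t in a..x, Gx x t) (Icc a b) x := by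
  have hcont : ContinuousOn (fun y => G y y + ∫ t in a..y, Gx y t) (Icc a b) :=
    (continuousOn_diag_of_closedTriangle hG).add (continuousOn_integral_closedTriangle hGxc)
  have : Fact (x ∈ Icc a b) := ⟨hx⟩
  refine HasDerivWithinAt.congr ?_
    (fun y hy => integral_eq_integral_diag_add hG hGx hGxc hy)
    (integral_eq_integral_diag_add hG hGx hGxc hx)
  exact intervalIntegral.integral_hasDerivWithinAt_right
    ((hcont.mono (Icc_subset_Icc_right hx.2)).intervalIntegrable_of_Icc hx.1)
    (hcont.stronglyMeasurableAtFilter_nhdsWithin measurableSet_Icc x) (hcont x hx)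

theorem hasDerivWithinAt_diag {Gt : E}
    (hGx : ∀ y t : ℝ, a ≤ t → t ≤ y → y ≤ x →
      HasDerivWithinAt (fun z => G z t) (Gx y t) (Icc t x) y)
    (hGxc : ContinuousWithinAt (fun p : ℝ × ℝ => Gx p.1 p.2) (closedTriangle a x) (x, x))
    (hGt : HasDerivWithinAt (G x) Gt (Icc a x) x) :
    HasDerivWithinAt (fun y => G y y) (Gx x x + Gt) (Icc a x) x := by
  suffices hinc : HasDerivWithinAt (fun s => G x s - G s s) (-Gx x x) (Icc a x) x by
    convert hGt.sub hinc using 1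
    · ext s; simp
    · abel
  rw [hasDerivWithinAt_iff_isLittleO, Asymptotics.isLittleO_iff]
  intro ε hε
  obtain ⟨δ, hδ, hGxδ⟩ := Metric.continuousWithinAt_iff.1 hGxc ε hε
  filter_upwards [mem_nhdsWithin_of_mem_nhds (Metric.ball_mem_nhds x hδ), self_mem_nhdsWithin]
    with s hsδ hs
  have hbound : ∀ y ∈ Icc s x, ‖Gx y s - (1 : ℝ) • Gx x x‖ ≤ ε := fun y hy => by
    have hdist : dist (y, s) (x, x) < δ :=
      max_lt ((Real.dist_right_le_of_mem_uIcc (Icc_subset_uIcc hy)).trans_lt hsδ) hsδ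
    simpa [dist_eq_norm] using (hGxδ ⟨hs.1, hy.1, hy.2⟩ hdist).le
  have hmean := (convex_Icc s x).norm_image_sub_le_of_norm_hasDerivWithin_le
    (f := fun y => G y s - y • Gx x x)
    (fun y hy => (hGx y s hs.1 hy.1 hy.2).sub ((hasDerivWithinAt_id y _).smul_const _))
    hbound (left_mem_Icc.2 hs.2) (right_mem_Icc.2 hs.2)
  rw [norm_sub_rev s x]
  refine le_of_eq_of_le (congrArg norm ?_) hmean
  module

theorem eq_add_of_hasDerivWithinAt_diag {D Gt : E}
    (hGx : ∀ x t : ℝ, a ≤ t → t ≤ x → x ≤ b →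
      HasDerivWithinAt (fun y => G y t) (Gx x t) (Icc t b) x)
    (hGxc : ContinuousOn (fun p : ℝ × ℝ => Gx p.1 p.2) (closedTriangle a b))
    (hx : x ∈ Ioc a b) (hGt : HasDerivWithinAt (G x) Gt (Icc a x) x)
    (hD : HasDerivWithinAt (fun y => G y y) D (Icc a b) x) :
    D = Gx x x + Gt := by
  have hchain : HasDerivWithinAt (fun y => G y y) (Gx x x + Gt) (Icc a x) x :=
    hasDerivWithinAt_diag
      (fun y t ht hty hyx => (hGx y t ht hty (hyx.trans hx.2)).mono (Icc_subset_Icc_right hx.2))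
      ((hGxc (x, x) ⟨hx.1.le, le_rfl, hx.2⟩).mono (closedTriangle_subset_closedTriangle hx.2)) hGt
  exact (uniqueDiffOn_Icc hx.1 x (right_mem_Icc.2 hx.1.le)).eq_deriv _
    (hD.mono (Icc_subset_Icc_right hx.2)) hchain

end Triangle

section Boundary

variable {A : Type*} [NormedRing A]

theorem intervalIntegrable_mul_closedTriangle {G : ℝ → ℝ → A} {φ : ℝ → A} {a b x : ℝ}
    (hG : ContinuousOn (fun p : ℝ × ℝ => G p.1 p.2) (closedTriangle a b))
    (hφ : ContinuousOn φ (Icc a b)) (hx : x ∈ Icc a b) :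
    IntervalIntegrable (fun t => G x t * φ t) volume a x :=
  ((continuousOn_snd_of_closedTriangle hG hx.2).mul
    (hφ.mono (Icc_subset_Icc_right hx.2))).intervalIntegrable_of_Icc hx.1

theorem isLittleO_rpow_inv_nhdsGT_zero {l : ℝ} (hl : -1 < l) :
    (fun t : ℝ => t ^ l) =o[𝓝[>] 0] fun t => t⁻¹ := by
  have hlim : Tendsto (fun t : ℝ => t ^ (l + 1)) (𝓝[>] 0) (𝓝 0) := by
    have h := (Real.continuousAt_rpow_const 0 (l + 1) (.inr (by linarith))).tendsto
    rw [Real.zero_rpow (by linarith)] at h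
    exact h.mono_left nhdsWithin_le_nhds
  refine (Asymptotics.isLittleO_iff_tendsto' ?_).2 (hlim.congr' ?_) <;>
    filter_upwards [self_mem_nhdsWithin] with t ht
  · intro h
    exact absurd h (inv_ne_zero (ne_of_gt ht))
  · rw [Real.rpow_add_one (ne_of_gt ht), div_inv_eq_mul]

theorem isLittleO_inv_nhdsGT_zero_of_tendsto {E : Type*} [SeminormedAddCommGroup E] {f : ℝ → E}
    {y : E} (hf : Tendsto f (𝓝[>] 0) (𝓝 y)) : f =o[𝓝[>] 0] fun t => t⁻¹ := by
  refine (hf.isBigO_one ℝ).trans_isLittleO ?_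
  simpa only [Real.rpow_zero] using isLittleO_rpow_inv_nhdsGT_zero (l := 0) (by norm_num)

theorem isLittleO_inv_nhdsGT_zero_of_rpow_or_extension {E : Type*} [SeminormedAddCommGroup E]
    {f : ℝ → E} {b l : ℝ} (hb : 0 < b) (hl : -1 < l)
    (hext : 0 ≤ l → ∃ g : ℝ → E, ContinuousOn g (Icc 0 b) ∧ ∀ x ∈ Ioc 0 b, g x = f x)
    (hO : l < 0 → f =O[𝓝[>] 0] fun t => t ^ l) : f =o[𝓝[>] 0] fun t => t⁻¹ := by
  rcases lt_or_ge l 0 with hl0 | hl0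
  · exact (hO hl0).trans_isLittleO (isLittleO_rpow_inv_nhdsGT_zero hl)
  · obtain ⟨g, hg, hgf⟩ := hext hl0
    have hg0 : Tendsto g (𝓝[>] 0) (𝓝 (g 0)) :=
      (hg 0 (left_mem_Icc.2 hb.le)).mono_left
        (nhdsWithin_Ioc_eq_nhdsGT hb ▸ nhdsWithin_mono 0 Ioc_subset_Icc_self)
    have hgf' : g =ᶠ[𝓝[>] 0] f := by filter_upwards [Ioc_mem_nhdsGT hb] using hgf
    exact isLittleO_inv_nhdsGT_zero_of_tendsto (hg0.congr' hgf')

theorem tendsto_mul_zero_of_isLittleO_inv [NormedSpace ℝ A] {k f : ℝ → A} {k' : A} {a : ℝ}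
    (hk : HasDerivWithinAt k k' (Ioi a) a) (hka : k a = 0)
    (hf : f =o[𝓝[>] a] fun t => (t - a)⁻¹) :
    Tendsto (fun t => k t * f t) (𝓝[>] a) (𝓝 0) := by
  have hkO : k =O[𝓝[>] a] fun t => t - a := by
    simpa [hka] using hk.differentiableWithinAt.isBigO_sub
  refine (Asymptotics.isLittleO_one_iff ℝ).1 ((hkO.mul_isLittleO hf).congr' .rfl ?_)
  filter_upwards [self_mem_nhdsWithin] with t ht
  exact mul_inv_cancel₀ (sub_ne_zero.2 (ne_of_gt ht))

theorem integral_deriv_deriv_mul_sub_mul_deriv_deriv [NormedAlgebra ℝ A] [CompleteSpace A]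
    {k k' k'' φ φ' φ'' : ℝ → A} {a x : ℝ} (hax : a < x)
    (hk : ∀ t ∈ Icc a x, HasDerivWithinAt k (k' t) (Icc a x) t)
    (hk' : ∀ t ∈ Icc a x, HasDerivWithinAt k' (k'' t) (Icc a x) t)
    (hk'' : ContinuousOn k'' (Icc a x)) (hka : k a = 0)
    (hφc : ContinuousOn φ (Icc a x)) (hφa : φ a = 0)
    (hφ : ∀ t ∈ Ioc a x, HasDerivWithinAt φ (φ' t) (Ioc a x) t)
    (hφ' : ∀ t ∈ Ioc a x, HasDerivWithinAt φ' (φ'' t) (Ioc a x) t)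
    (hφ'o : φ' =o[𝓝[>] a] fun t => (t - a)⁻¹)
    (hint : IntervalIntegrable (fun t => k t * φ'' t) volume a x) :
    ∫ t in a..x, (k'' t * φ t - k t * φ'' t) = k' x * φ x - k x * φ' x := by
  have hkc : ContinuousOn k (Icc a x) := fun t ht => (hk t ht).continuousWithinAt
  have hk'c : ContinuousOn k' (Icc a x) := fun t ht => (hk' t ht).continuousWithinAt
  have hφ'c : ContinuousOn φ' (Ioc a x) := fun t ht => (hφ' t ht).continuousWithinAt
  have hderiv : ∀ t ∈ Ioo a x, HasDerivAt (fun t => k' t * φ t - k t * φ' t)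
      (k'' t * φ t - k t * φ'' t) t := fun t ht => by
    have hIcc : Icc a x ∈ 𝓝 t := Icc_mem_nhds ht.1 ht.2
    have hIoc : Ioc a x ∈ 𝓝 t := Ioc_mem_nhds ht.1 ht.2
    have hk't := (hk' t ⟨ht.1.le, ht.2.le⟩).hasDerivAt hIcc
    have hφt := (hφ t ⟨ht.1, ht.2.le⟩).hasDerivAt hIoc
    have hkt := (hk t ⟨ht.1.le, ht.2.le⟩).hasDerivAt hIcc
    have hφ't := (hφ' t ⟨ht.1, ht.2.le⟩).hasDerivAt hIoc
    exact ((hk't.mul hφt).sub (hkt.mul hφ't)).congr_deriv (by abel)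
  have hleft : Tendsto (fun t => k' t * φ t - k t * φ' t) (𝓝[>] a) (𝓝 0) := by
    have hk'φ : Tendsto (fun t => k' t * φ t) (𝓝[>] a) (𝓝 (k' a * φ a)) :=
      ((hk'c.mul hφc) a (left_mem_Icc.2 hax.le)).mono_left
        (nhdsWithin_Ioc_eq_nhdsGT hax ▸ nhdsWithin_mono a Ioc_subset_Icc_self)
    have hkφ' : Tendsto (fun t => k t * φ' t) (𝓝[>] a) (𝓝 0) :=
      tendsto_mul_zero_of_isLittleO_inv
        ((hk a (left_mem_Icc.2 hax.le)).mono_of_mem_nhdsWithin (Icc_mem_nhdsGT hax)) hka hφ'o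
    simpa [hφa] using hk'φ.sub hkφ'
  have hright : Tendsto (fun t => k' t * φ t - k t * φ' t) (𝓝[<] x)
      (𝓝 (k' x * φ x - k x * φ' x)) := by
    have hcont : ContinuousOn (fun t => k' t * φ t - k t * φ' t) (Ioc a x) :=
      ((hk'c.mul hφc).mono Ioc_subset_Icc_self).sub ((hkc.mono Ioc_subset_Icc_self).mul hφ'c)
    exact (hcont x (right_mem_Ioc.2 hax)).mono_left
      (nhdsWithin_Ioo_eq_nhdsLT hax ▸ nhdsWithin_mono x Ioo_subset_Ioc_self)
  have hk''φ : IntervalIntegrable (fun t => k'' t * φ t) volume a x :=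
    (hk''.mul hφc).intervalIntegrable_of_Icc hax.le
  rw [intervalIntegral.integral_eq_sub_of_hasDerivAt_of_tendsto hax hderiv (hk''φ.sub hint)
    hleft hright, sub_zero]

end Boundary

section Transmutation

variable {A : Type*} [NormedRing A] [NormedAlgebra ℝ A] [CompleteSpace A]

theorem hasDerivWithinAt_integral_mul_closedTriangle {G Gx : ℝ → ℝ → A} {φ : ℝ → A} {a b x : ℝ}
    (hG : ContinuousOn (fun p : ℝ × ℝ => G p.1 p.2) (closedTriangle a b))
    (hGx : ∀ x t : ℝ, a ≤ t → t ≤ x → x ≤ b →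
      HasDerivWithinAt (fun y => G y t) (Gx x t) (Icc t b) x)
    (hGxc : ContinuousOn (fun p : ℝ × ℝ => Gx p.1 p.2) (closedTriangle a b))
    (hφ : ContinuousOn φ (Icc a b)) (hx : x ∈ Icc a b) :
    HasDerivWithinAt (fun x => ∫ t in a..x, G x t * φ t)
      (G x x * φ x + ∫ t in a..x, Gx x t * φ t) (Icc a b) x := by
  have hφ₂ : ContinuousOn (fun p : ℝ × ℝ => φ p.2) (closedTriangle a b) :=
    hφ.comp continuousOn_snd fun p hp => ⟨hp.1, hp.2.1.trans hp.2.2⟩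
  exact hasDerivWithinAt_integral_closedTriangle (hG.mul hφ₂)
    (fun x t ht htx hxb => (hGx x t ht htx hxb).mul_const (φ t)) (hGxc.mul hφ₂) hx

theorem integral_mul_sub_potential_mul {k kxx ktt φ φ'' v : ℝ → A} {w : A} {a x : ℝ} (hax : a ≤ x)
    (hwave : ∀ t ∈ Ioc a x, kxx t - ktt t - w * k t + k t * v t = 0)
    (hk : IntervalIntegrable (fun t => k t * φ t) volume a x)
    (hkxx : IntervalIntegrable (fun t => kxx t * φ t) volume a x)
    (hktt : IntervalIntegrable (fun t => ktt t * φ t - k t * φ'' t) volume a x) :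
    ∫ t in a..x, k t * (φ'' t - v t * φ t) =
      (∫ t in a..x, kxx t * φ t) - w * (∫ t in a..x, k t * φ t) -
        ∫ t in a..x, (ktt t * φ t - k t * φ'' t) := by
  have hmul : ∫ t in a..x, w * (k t * φ t) = w * ∫ t in a..x, k t * φ t :=
    (ContinuousLinearMap.mul ℝ A w).intervalIntegral_comp_comm hk
  rw [← hmul, ← intervalIntegral.integral_sub hkxx (hk.const_mul w),
    ← intervalIntegral.integral_sub (hkxx.sub (hk.const_mul w)) hktt]
  refine intervalIntegral.integral_congr_ae (.of_forall fun t ht => ?_)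
  rw [uIoc_of_le hax] at ht
  have hkv : k t * v t = w * k t + ktt t - kxx t := by
    rw [← sub_eq_zero, ← hwave t ht]
    abel
  rw [mul_sub, ← mul_assoc, hkv]
  noncomm_ring

theorem stmt_8_general {b : ℝ} {v q : ℝ → A} {K Kx Kxx Kt Ktt : ℝ → ℝ → A}
    (hKc : ContinuousOn (fun p : ℝ × ℝ => K p.1 p.2) (closedTriangle 0 b))
    (hKx : ∀ x t : ℝ, 0 ≤ t → t ≤ x → x ≤ b →
      HasDerivWithinAt (fun y => K y t) (Kx x t) (Icc t b) x)
    (hKxc : ContinuousOn (fun p : ℝ × ℝ => Kx p.1 p.2) (closedTriangle 0 b))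
    (hKxx : ∀ x t : ℝ, 0 ≤ t → t ≤ x → x ≤ b →
      HasDerivWithinAt (fun y => Kx y t) (Kxx x t) (Icc t b) x)
    (hKxxc : ContinuousOn (fun p : ℝ × ℝ => Kxx p.1 p.2) (closedTriangle 0 b))
    (hKt : ∀ x t : ℝ, 0 ≤ t → t ≤ x → x ≤ b →
      HasDerivWithinAt (K x) (Kt x t) (Icc 0 x) t)
    (hKtt : ∀ x t : ℝ, 0 ≤ t → t ≤ x → x ≤ b →
      HasDerivWithinAt (Kt x) (Ktt x t) (Icc 0 x) t)
    (hKttc : ContinuousOn (fun p : ℝ × ℝ => Ktt p.1 p.2) (closedTriangle 0 b))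
    (hPDE : ∀ x t : ℝ, 0 < t → t ≤ x → x ≤ b →
      Kxx x t - Ktt x t - v x * K x t + K x t * v t - q x * K x t = 0)
    (hdiag : ∀ x ∈ Icc (0 : ℝ) b,
      HasDerivWithinAt (fun y => K y y) ((2⁻¹ : ℝ) • q x) (Icc 0 b) x)
    (hK0 : ∀ x ∈ Icc (0 : ℝ) b, K x 0 = 0)
    {φ φ' φ'' : ℝ → A} (hφc : ContinuousOn φ (Icc 0 b)) (hφ0 : φ 0 = 0)
    (hφ1 : ∀ x ∈ Ioc (0 : ℝ) b, HasDerivWithinAt φ (φ' x) (Ioc 0 b) x)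
    (hφ2 : ∀ x ∈ Ioc (0 : ℝ) b, HasDerivWithinAt φ' (φ'' x) (Ioc 0 b) x)
    (hφ'o : φ' =o[𝓝[>] 0] fun t => t⁻¹)
    (hint : ∀ x ∈ Ioc (0 : ℝ) b, IntegrableOn (fun t => K x t * φ'' t) (Ioc 0 x))
    {T : ℝ → A} (hT : ∀ x, T x = φ x + ∫ t in (0 : ℝ)..x, K x t * φ t) :
    ∃ T' T'' : ℝ → A,
      (∀ x ∈ Ioc (0 : ℝ) b, HasDerivWithinAt T (T' x) (Ioc 0 b) x) ∧
      (∀ x ∈ Ioc (0 : ℝ) b, HasDerivWithinAt T' (T'' x) (Ioc 0 b) x) ∧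
      ∀ x ∈ Ioc (0 : ℝ) b,
        T'' x - (v x + q x) * T x =
          φ'' x - v x * φ x + ∫ t in (0 : ℝ)..x, K x t * (φ'' t - v t * φ t) := by
  obtain rfl : T = fun x => φ x + ∫ t in (0 : ℝ)..x, K x t * φ t := funext hT
  refine ⟨fun x => φ' x + (K x x * φ x + ∫ t in (0 : ℝ)..x, Kx x t * φ t),
    fun x => φ'' x + ((((2⁻¹ : ℝ) • q x) * φ x + K x x * φ' x) +
      (Kx x x * φ x + ∫ t in (0 : ℝ)..x, Kxx x t * φ t)),
    fun x hx => ?_, fun x hx => ?_, fun x hx => ?_⟩ <;>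
    have hx' : x ∈ Icc 0 b := Ioc_subset_Icc_self hx
  · exact (hφ1 x hx).add ((hasDerivWithinAt_integral_mul_closedTriangle hKc hKx hKxc hφc hx').mono
      Ioc_subset_Icc_self)
  · exact (hφ2 x hx).add ((((hdiag x hx').mono Ioc_subset_Icc_self).mul (hφ1 x hx)).add
      ((hasDerivWithinAt_integral_mul_closedTriangle hKxc hKxx hKxxc hφc hx').mono
        Ioc_subset_Icc_self))
  have hsub : Icc 0 x ⊆ Icc 0 b := Icc_subset_Icc_right hx.2
  have hsub' : Ioc 0 x ⊆ Ioc 0 b := Ioc_subset_Ioc_right hx.2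
  have hKφ'' : IntervalIntegrable (fun t => K x t * φ'' t) volume 0 x :=
    (intervalIntegrable_iff_integrableOn_Ioc_of_le hx.1.le).2 (hint x hx)
  have hparts : ∫ t in (0 : ℝ)..x, (Ktt x t * φ t - K x t * φ'' t) =
      Kt x x * φ x - K x x * φ' x :=
    integral_deriv_deriv_mul_sub_mul_deriv_deriv hx.1 (fun t ht => hKt x t ht.1 ht.2 hx.2)
      (fun t ht => hKtt x t ht.1 ht.2 hx.2) (continuousOn_snd_of_closedTriangle hKttc hx.2)
      (hK0 x hx') (hφc.mono hsub) hφ0 (fun t ht => (hφ1 t (hsub' ht)).mono hsub')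
      (fun t ht => (hφ2 t (hsub' ht)).mono hsub') (by simpa using hφ'o) hKφ''
  have hTL₀ := integral_mul_sub_potential_mul (w := v x + q x) hx.1.le
    (fun t ht => by rw [← hPDE x t ht.1 ht.2 hx.2]; noncomm_ring)
    (intervalIntegrable_mul_closedTriangle hKc hφc hx')
    (intervalIntegrable_mul_closedTriangle hKxxc hφc hx')
    ((intervalIntegrable_mul_closedTriangle hKttc hφc hx').sub hKφ'')
  have hhalf : (2⁻¹ : ℝ) • q x = Kx x x + Kt x x :=
    eq_add_of_hasDerivWithinAt_diag hKx hKxc hx (hKt x x hx.1.le le_rfl hx.2) (hdiag x hx')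
  have hq : q x = 2 * (Kx x x + Kt x x) := by
    rw [← hhalf, two_mul, ← two_smul ℝ, smul_inv_smul₀ two_ne_zero]
  beta_reduce
  rw [hTL₀, hparts, hhalf, hq]
  noncomm_ring

end Transmutation

/-- The transmutation property `L T φ = T L₀ φ`, where
`L = d²/dx² - (l(l+1)/x² + q(x))`, `L₀ = d²/dx² - l(l+1)/x²` and
`(Tφ)(x) = φ(x) + ∫₀ˣ K(x,t) φ(t) dt`. -/
theorem stmt_8 (b l : ℝ) (hb : 0 < b) (hl : -(1/2) ≤ l)
    (q : ℝ → ℂ) (hq : ContinuousOn q (Set.Icc 0 b))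
    (K Kx Kxx Kt Ktt : ℝ → ℝ → ℂ)
    (hKc : ContinuousOn (fun p : ℝ × ℝ => K p.1 p.2)
      {p : ℝ × ℝ | 0 ≤ p.2 ∧ p.2 ≤ p.1 ∧ p.1 ≤ b})
    (hKx : ∀ x t : ℝ, 0 ≤ t → t ≤ x → x ≤ b →
      HasDerivWithinAt (fun y => K y t) (Kx x t) (Set.Icc t b) x)
    (hKxx : ∀ x t : ℝ, 0 ≤ t → t ≤ x → x ≤ b →
      HasDerivWithinAt (fun y => Kx y t) (Kxx x t) (Set.Icc t b) x)
    (hKt : ∀ x t : ℝ, 0 ≤ t → t ≤ x → x ≤ b →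
      HasDerivWithinAt (fun s => K x s) (Kt x t) (Set.Icc 0 x) t)
    (hKtt : ∀ x t : ℝ, 0 ≤ t → t ≤ x → x ≤ b →
      HasDerivWithinAt (fun s => Kt x s) (Ktt x t) (Set.Icc 0 x) t)
    (hC2 : ContinuousOn (fun p : ℝ × ℝ => (Kx p.1 p.2, Kxx p.1 p.2, Kt p.1 p.2, Ktt p.1 p.2))
      {p : ℝ × ℝ | 0 ≤ p.2 ∧ p.2 ≤ p.1 ∧ p.1 ≤ b})
    (hPDE : ∀ x t : ℝ, 0 < t → t ≤ x → x ≤ b →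
      Kxx x t - Ktt x t - ((l * (l + 1) / x ^ 2 : ℝ) : ℂ) * K x t +
        ((l * (l + 1) / t ^ 2 : ℝ) : ℂ) * K x t - q x * K x t = 0)
    (hdiag : ∀ x ∈ Set.Icc (0:ℝ) b, HasDerivWithinAt (fun y => K y y) (q x / 2) (Set.Icc 0 b) x)
    (hK0 : ∀ x ∈ Set.Icc (0:ℝ) b, K x 0 = 0)
    (φ φ' φ'' : ℝ → ℂ)
    (hφc : ContinuousOn φ (Set.Icc 0 b)) (hφ0 : φ 0 = 0)
    (hφ1 : ∀ x ∈ Set.Ioc (0:ℝ) b, HasDerivWithinAt φ (φ' x) (Set.Ioc 0 b) x)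
    (hφ2 : ∀ x ∈ Set.Ioc (0:ℝ) b, HasDerivWithinAt φ' (φ'' x) (Set.Ioc 0 b) x)
    (hφ2c : ContinuousOn φ'' (Set.Ioc 0 b))
    (hext : 0 ≤ l → ∃ ψ : ℝ → ℂ, ContinuousOn ψ (Set.Icc 0 b) ∧
      ∀ x ∈ Set.Ioc (0:ℝ) b, ψ x = φ' x)
    (hO : l < 0 → Asymptotics.IsBigO (nhdsWithin (0:ℝ) (Set.Ioi 0)) φ' fun t : ℝ => t ^ l)
    (hint : ∀ x ∈ Set.Ioc (0:ℝ) b,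
      MeasureTheory.IntegrableOn (fun t => K x t * φ'' t) (Set.Ioc 0 x))
    (T : ℝ → ℂ)
    (hT : ∀ x : ℝ, T x = φ x + ∫ t in (0:ℝ)..x, K x t * φ t) :
    ∃ T' T'' : ℝ → ℂ,
      (∀ x ∈ Set.Ioc (0:ℝ) b, HasDerivWithinAt T (T' x) (Set.Ioc 0 b) x) ∧
      (∀ x ∈ Set.Ioc (0:ℝ) b, HasDerivWithinAt T' (T'' x) (Set.Ioc 0 b) x) ∧
      ∀ x ∈ Set.Ioc (0:ℝ) b,
        T'' x - (((l * (l + 1) / x ^ 2 : ℝ) : ℂ) + q x) * T x =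
          φ'' x - ((l * (l + 1) / x ^ 2 : ℝ) : ℂ) * φ x +
            ∫ t in (0:ℝ)..x, K x t * (φ'' t - ((l * (l + 1) / t ^ 2 : ℝ) : ℂ) * φ t) := by
  have hφ'o : φ' =o[𝓝[>] 0] fun t : ℝ => t⁻¹ :=
    isLittleO_inv_nhdsGT_zero_of_rpow_or_extension hb (by linarith) hext hO
  exact stmt_8_general (v := fun x => ((l * (l + 1) / x ^ 2 : ℝ) : ℂ)) hKc hKx hC2.fst hKxx
    hC2.snd.fst hKt hKtt hC2.snd.snd.snd
    (fun x t ht htx hxb => by rw [mul_comm (K x t)]; exact hPDE x t ht htx hxb)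
    (fun x hx => by simpa [div_eq_inv_mul] using hdiag x hx) hK0 hφc hφ0 hφ1 hφ2 hφ'o hint hT
end

section
/- Let b > 0, let l ≥ -1/2 be real, and let q : [0,b] → ℂ be continuous. Suppose K : [0,b] × [0,b] → ℂ is continuous, its restrictions to the closed triangles {0 ≤ t ≤ x ≤ b} and {0 ≤ x ≤ t ≤ b} are twice continuously differentiable, and K satisfies: (i) ∂²K/∂x² - ∂²K/∂t² - (l(l+1)/x²)K + (l(l+1)/t²)K - q(x)K = 0 for 0 < t ≤ x ≤ b; (ii) d/dx[K(x,x)] = q(x)/2 for x ∈ [0,b]; (iii) K(x,0) = 0 and K(0,t) = 0 for all x, t ∈ [0,b]. For 0 < x < τ < b define k(x,τ) = K(x,τ) - ∫₀ˣ K(t,x)K(t,τ) dt, and define (T[k(·,τ)])(x) = k(x,τ) + ∫₀ˣ K(x,t)k(t,τ) dt. Then for all 0 < x < τ < b: d²/dx²[(T[k(·,τ)])(x)] - (l(l+1)/x² + q(x))·(T[k(·,τ)])(x) = [∂²k/∂x²(x,τ) - (l(l+1)/x²)k(x,τ)] + ∫₀ˣ K(x,t)·[∂²k/∂x²(t,τ)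 - (l(l+1)/t²)k(t,τ)] dt, where ∂²k/∂x²(t,τ) denotes the second partial derivative of k in its first variable evaluated at (t,τ). -/
/-!
Differentiating `∫₀ˣ K(x, t) u(t) dt` twice under the integral sign produces the diagonal terms
`(K(x, x) u(x))' + Kₓ(x, x) u(x)` and the integral of `Kₓₓ u`. By the equation for `K`, the
function `K (u'' - V u)` is the sum of `K u'' - Kₜₜ u`, whose integral is a boundary term by Green's
identity, and of `Kₓₓ u - (V(x) + q(x)) K u`. The boundary terms match because `q / 2 = Kₓ + Kₜ` on
the diagonal, and this gives `L T u = T L₀ u` for every `u` of class `C²` with `u(0) = 0`. The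
function `u = k(·, τ)` is of this kind on `[0, τ]`, where it involves only values of `K` on the
triangle above the diagonal.

Since `K` is only `C²` up to the boundary of each closed triangle, the Leibniz rule is obtained from
Fubini's theorem on the triangle.
-/

open Set MeasureTheory Filter Topology Function

section Triangle

variable {E : Type*} [NormedAddCommGroup E] {a b : ℝ}

/-- The closed triangle `a ≤ t ≤ x ≤ b` of pairs `(x, t)`, on which Volterra kernels live. -/
def lowerTriangle (a b : ℝ) : Set (ℝ × ℝ) :=
  {p | a ≤ p.2 ∧ p.2 ≤ p.1 ∧ p.1 ≤ b}

lemma lowerTriangle_subset_left {a' : ℝ} (h : a ≤ a') : lowerTriangle a' b ⊆ lowerTriangle a b :=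
  fun _ hp => ⟨h.trans hp.1, hp.2⟩

lemma lowerTriangle_subset_right {b' : ℝ} (h : b' ≤ b) : lowerTriangle a b' ⊆ lowerTriangle a b :=
  fun _ hp => ⟨hp.1, hp.2.1, hp.2.2.trans h⟩

lemma isClosed_lowerTriangle : IsClosed (lowerTriangle a b) :=
  (isClosed_le continuous_const continuous_snd).inter <|
    (isClosed_le continuous_snd continuous_fst).inter (isClosed_le continuous_fst continuous_const)

lemma isCompact_lowerTriangle : IsCompact (lowerTriangle a b) :=
  (isCompact_Icc (a := a) (b := b) |>.prod (isCompact_Icc (a := a) (b := b))).of_isClosed_subset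
    isClosed_lowerTriangle
    fun _ hp => ⟨⟨hp.1.trans hp.2.1, hp.2.2⟩, ⟨hp.1, hp.2.1.trans hp.2.2⟩⟩

lemma convex_lowerTriangle : Convex ℝ (lowerTriangle a b) := by
  have hinter : lowerTriangle a b =
      LinearMap.snd ℝ ℝ ℝ ⁻¹' Ici a ∩ {p | p.1 ∈ Iic b ∧ p.2 ≤ id p.1} :=
    ext fun _ => and_congr_right fun _ => and_comm
  rw [hinter]
  exact ((convex_Ici a).linear_preimage _).inter (concaveOn_id (convex_Iic b)).convex_hypograph

lemma uniqueDiffOn_lowerTriangle (hab : a < b) : UniqueDiffOn ℝ (lowerTriangle a b) := by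
  let U : Set (ℝ × ℝ) := {p | a < p.2 ∧ p.2 < p.1 ∧ p.1 < b}
  have hU : IsOpen U := (isOpen_lt continuous_const continuous_snd).inter <|
    (isOpen_lt continuous_snd continuous_fst).inter (isOpen_lt continuous_fst continuous_const)
  have hsub : U ⊆ lowerTriangle a b := fun p hp => ⟨hp.1.le, hp.2.1.le, hp.2.2.le⟩
  obtain ⟨t, hat, htb⟩ := exists_between hab
  obtain ⟨x, htx, hxb⟩ := exists_between htb
  exact uniqueDiffOn_convex convex_lowerTriangle
    ⟨(x, t), interior_maximal hsub hU ⟨hat, htx, hxb⟩⟩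

lemma exists_continuous_eqOn_lowerTriangle {X : Type*} [TopologicalSpace X] (hab : a ≤ b)
    {G : ℝ × ℝ → X} (hG : ContinuousOn G (lowerTriangle a b)) :
    ∃ H : ℝ × ℝ → X, Continuous H ∧ EqOn H G (lowerTriangle a b) := by
  let clampFst (p : ℝ × ℝ) : ℝ := max a (min p.1 b)
  let retraction (p : ℝ × ℝ) : ℝ × ℝ := (clampFst p, max a (min p.2 (clampFst p)))
  have hmem (p : ℝ × ℝ) : retraction p ∈ lowerTriangle a b :=
    ⟨le_max_left _ _, max_le (le_max_left _ _) (min_le_right _ _), max_le hab (min_le_right _ _)⟩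
  refine ⟨G ∘ retraction, hG.comp_continuous (by fun_prop) hmem, fun p hp => ?_⟩
  have hfst : clampFst p = p.1 := by
    simp only [clampFst, min_eq_left hp.2.2, max_eq_right (hp.1.trans hp.2.1)]
  simp only [comp_apply, retraction, hfst, min_eq_left hp.2.1, max_eq_right hp.1]

variable [NormedSpace ℝ E]

lemma continuousOn_integral_lowerTriangle {G : ℝ → ℝ → E}
    (hG : ContinuousOn (uncurry G) (lowerTriangle a b)) :
    ContinuousOn (fun x => ∫ t in a..x, G x t) (Icc a b) := by
  rcases lt_or_ge b a with hba | hab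
  · simp [Icc_eq_empty_of_lt hba]
  obtain ⟨H, hH, hHG⟩ := exists_continuous_eqOn_lowerTriangle hab hG
  have hcont : Continuous fun x => ∫ t in a..x, H (x, t) :=
    intervalIntegral.continuous_parametric_intervalIntegral_of_continuous
      (f := fun x t => H (x, t)) hH continuous_id
  refine hcont.continuousOn.congr fun x hx => intervalIntegral.integral_congr fun t ht => ?_
  rw [uIcc_of_le hx.1] at ht
  exact (hHG (x := (x, t)) ⟨ht.1, ht.2, hx.2⟩).symm

lemma integral_indicator_lowerTriangle_fst {G : ℝ → ℝ → E} {t : ℝ} (ht : t ∈ Icc a b) :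
    ∫ s in a..b, (lowerTriangle a b).indicator (uncurry G) (s, t) = ∫ s in t..b, G s t := by
  rw [intervalIntegral.integral_of_le (ht.1.trans ht.2), intervalIntegral.integral_of_le ht.2,
    ← integral_Icc_eq_integral_Ioc, ← integral_Icc_eq_integral_Ioc]
  have hsection : (fun s => (lowerTriangle a b).indicator (uncurry G) (s, t)) =
      (Icc t b).indicator fun s => G s t := by
    ext s
    simp only [indicator, lowerTriangle, mem_ofPred_eq, mem_Icc, uncurry, ht.1, true_and]
  rw [hsection, setIntegral_indicator measurableSet_Icc,
    inter_eq_right.2 (Icc_subset_Icc_left ht.1)]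

lemma integral_indicator_lowerTriangle_snd {G : ℝ → ℝ → E} {s : ℝ} (hs : s ∈ Icc a b) :
    ∫ t in a..b, (lowerTriangle a b).indicator (uncurry G) (s, t) = ∫ t in a..s, G s t := by
  rw [intervalIntegral.integral_of_le (hs.1.trans hs.2), intervalIntegral.integral_of_le hs.1,
    ← integral_Icc_eq_integral_Ioc, ← integral_Icc_eq_integral_Ioc]
  have hsection : (fun t => (lowerTriangle a b).indicator (uncurry G) (s, t)) =
      (Icc a s).indicator fun t => G s t := by
    ext t
    simp only [indicator, lowerTriangle, mem_ofPred_eq, mem_Icc, uncurry, hs.2, and_true]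
  rw [hsection, setIntegral_indicator measurableSet_Icc,
    inter_eq_right.2 (Icc_subset_Icc_right hs.2)]

lemma intervalIntegrable_integral_lowerTriangle {G : ℝ → ℝ → E} (hab : a ≤ b)
    (hG : IntegrableOn (uncurry G) (lowerTriangle a b)) :
    IntervalIntegrable (fun t => ∫ s in t..b, G s t) volume a b := by
  have hsquare : Integrable ((lowerTriangle a b).indicator (uncurry G))
      ((volume.restrict (Ioc a b)).prod volume) :=
    (hG.integrable_indicator isClosed_lowerTriangle.measurableSet).mono_measure
      (Measure.prod_mono Measure.restrict_le_self le_rfl)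
  rw [intervalIntegrable_iff_integrableOn_Ioc_of_le hab]
  refine hsquare.integral_prod_right.integrableOn.congr_fun (fun t ht => ?_) measurableSet_Ioc
  simp only
  rw [← intervalIntegral.integral_of_le hab,
    integral_indicator_lowerTriangle_fst (Ioc_subset_Icc_self ht)]

lemma integral_integral_swap_lowerTriangle {G : ℝ → ℝ → E} (hab : a ≤ b)
    (hG : IntegrableOn (uncurry G) (lowerTriangle a b)) :
    ∫ t in a..b, ∫ s in t..b, G s t = ∫ s in a..b, ∫ t in a..s, G s t := by
  have hind : Integrable ((lowerTriangle a b).indicator (uncurry G)) :=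
    hG.integrable_indicator isClosed_lowerTriangle.measurableSet
  calc ∫ t in a..b, ∫ s in t..b, G s t
      = ∫ t in a..b, ∫ s in a..b, (lowerTriangle a b).indicator (uncurry G) (s, t) := by
        refine intervalIntegral.integral_congr fun t ht => ?_
        rw [uIcc_of_le hab] at ht
        exact (integral_indicator_lowerTriangle_fst ht).symm
    _ = ∫ s in a..b, ∫ t in a..b, (lowerTriangle a b).indicator (uncurry G) (s, t) :=
        intervalIntegral_intervalIntegral_swap hind.swap.integrableOn
    _ = ∫ s in a..b, ∫ t in a..s, G s t := by
        refine intervalIntegral.integral_congr fun s hs => ?_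
        rw [uIcc_of_le hab] at hs
        exact integral_indicator_lowerTriangle_snd hs

end Triangle

section TwiceDifferentiable

variable {E : Type*} [NormedAddCommGroup E] [NormedSpace ℝ E] {a b : ℝ}

/-- `f` is of class `C²` on `s ⊆ ℝ` with first and second derivatives `f'` and `f''`, one-sided at
the boundary points of `s`. -/
structure HasC2DerivOn (f f' f'' : ℝ → E) (s : Set ℝ) : Prop where
  hasDerivWithinAt : ∀ x ∈ s, HasDerivWithinAt f (f' x) s x
  hasDerivWithinAt_deriv : ∀ x ∈ s, HasDerivWithinAt f' (f'' x) s x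
  continuousOn_deriv_deriv : ContinuousOn f'' s

namespace HasC2DerivOn

variable {f f' f'' g g' g'' : ℝ → E} {s : Set ℝ}

lemma continuousOn (hf : HasC2DerivOn f f' f'' s) : ContinuousOn f s :=
  fun x hx => (hf.hasDerivWithinAt x hx).continuousWithinAt

lemma continuousOn_deriv (hf : HasC2DerivOn f f' f'' s) : ContinuousOn f' s :=
  fun x hx => (hf.hasDerivWithinAt_deriv x hx).continuousWithinAt

lemma add (hf : HasC2DerivOn f f' f'' s) (hg : HasC2DerivOn g g' g'' s) :
    HasC2DerivOn (fun x => f x + g x) (fun x => f' x + g' x) (fun x => f'' x + g'' x) s where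
  hasDerivWithinAt x hx := (hf.hasDerivWithinAt x hx).add (hg.hasDerivWithinAt x hx)
  hasDerivWithinAt_deriv x hx :=
    (hf.hasDerivWithinAt_deriv x hx).add (hg.hasDerivWithinAt_deriv x hx)
  continuousOn_deriv_deriv := hf.continuousOn_deriv_deriv.add hg.continuousOn_deriv_deriv

lemma sub (hf : HasC2DerivOn f f' f'' s) (hg : HasC2DerivOn g g' g'' s) :
    HasC2DerivOn (fun x => f x - g x) (fun x => f' x - g' x) (fun x => f'' x - g'' x) s where
  hasDerivWithinAt x hx := (hf.hasDerivWithinAt x hx).sub (hg.hasDerivWithinAt x hx)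
  hasDerivWithinAt_deriv x hx :=
    (hf.hasDerivWithinAt_deriv x hx).sub (hg.hasDerivWithinAt_deriv x hx)
  continuousOn_deriv_deriv := hf.continuousOn_deriv_deriv.sub hg.continuousOn_deriv_deriv

lemma mono {s' : Set ℝ} (hf : HasC2DerivOn f f' f'' s) (h : s' ⊆ s) :
    HasC2DerivOn f f' f'' s' where
  hasDerivWithinAt x hx := (hf.hasDerivWithinAt x (h hx)).mono h
  hasDerivWithinAt_deriv x hx := (hf.hasDerivWithinAt_deriv x (h hx)).mono h
  continuousOn_deriv_deriv := hf.continuousOn_deriv_deriv.mono h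

lemma hasDerivAt (hf : HasC2DerivOn f f' f'' s) {x : ℝ} (hx : s ∈ 𝓝 x) :
    HasDerivAt f (f' x) x :=
  (hf.hasDerivWithinAt x (mem_of_mem_nhds hx)).hasDerivAt hx

lemma hasDerivAt_deriv (hf : HasC2DerivOn f f' f'' s) {x : ℝ} (hx : s ∈ 𝓝 x) :
    HasDerivAt f' (f'' x) x :=
  (hf.hasDerivWithinAt_deriv x (mem_of_mem_nhds hx)).hasDerivAt hx

end HasC2DerivOn

lemma hasC2DerivOn_of_contDiffOn {f : ℝ → E} {s : Set ℝ} (hf : ContDiffOn ℝ 2 f s)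
    (hs : UniqueDiffOn ℝ s) :
    HasC2DerivOn f (derivWithin f s) (derivWithin (derivWithin f s) s) s := by
  have hf' : ContDiffOn ℝ 1 (derivWithin f s) s := hf.derivWithin hs (by norm_num)
  exact
    { hasDerivWithinAt x hx := (hf.differentiableOn two_ne_zero x hx).hasDerivWithinAt
      hasDerivWithinAt_deriv x hx := (hf'.differentiableOn one_ne_zero x hx).hasDerivWithinAt
      continuousOn_deriv_deriv := (hf'.derivWithin (m := 0) hs (by norm_num)).continuousOn }

/-- The kernel `F` on the triangle `a ≤ t ≤ x ≤ b` is twice continuously differentiable in its first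
variable `x`, with derivatives `Fx` and `Fxx`. -/
structure HasC2DerivFstOn (F Fx Fxx : ℝ → ℝ → E) (a b : ℝ) : Prop where
  hasDerivWithinAt : ∀ t ∈ Icc a b, ∀ x ∈ Icc t b,
    HasDerivWithinAt (fun y => F y t) (Fx x t) (Icc t b) x
  hasDerivWithinAt_deriv : ∀ t ∈ Icc a b, ∀ x ∈ Icc t b,
    HasDerivWithinAt (fun y => Fx y t) (Fxx x t) (Icc t b) x
  continuousOn_deriv : ContinuousOn (uncurry Fx) (lowerTriangle a b)
  continuousOn_deriv_deriv : ContinuousOn (uncurry Fxx) (lowerTriangle a b)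

lemma HasC2DerivFstOn.mono {F Fx Fxx : ℝ → ℝ → E} {b' : ℝ} (hF : HasC2DerivFstOn F Fx Fxx a b)
    (h : b' ≤ b) : HasC2DerivFstOn F Fx Fxx a b' where
  hasDerivWithinAt t ht x hx :=
    (hF.hasDerivWithinAt t (Icc_subset_Icc_right h ht) x (Icc_subset_Icc_right h hx)).mono
      (Icc_subset_Icc_right h)
  hasDerivWithinAt_deriv t ht x hx :=
    (hF.hasDerivWithinAt_deriv t (Icc_subset_Icc_right h ht) x (Icc_subset_Icc_right h hx)).mono
      (Icc_subset_Icc_right h)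
  continuousOn_deriv := hF.continuousOn_deriv.mono (lowerTriangle_subset_right h)
  continuousOn_deriv_deriv := hF.continuousOn_deriv_deriv.mono (lowerTriangle_subset_right h)

lemma exists_contDiffOn_hasDerivWithinAt_fst {S : Set (ℝ × ℝ)} (hS : UniqueDiffOn ℝ S)
    {f : ℝ × ℝ → E} {n : ℕ} (hf : ContDiffOn ℝ (n + 1) f S) :
    ∃ f' : ℝ × ℝ → E, ContDiffOn ℝ n f' S ∧ ∀ x t, (x, t) ∈ S →
      HasDerivWithinAt (fun y => f (y, t)) (f' (x, t)) {y | (y, t) ∈ S} x := by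
  refine ⟨fun p => fderivWithin ℝ f S p (1, 0),
    (hf.fderivWithin hS le_rfl).clm_apply contDiffOn_const, fun x t hp => ?_⟩
  have hf' : HasFDerivWithinAt f (fderivWithin ℝ f S (x, t)) S (x, t) :=
    (hf.differentiableOn (by norm_cast) (x, t) hp).hasFDerivWithinAt
  exact hf'.comp_hasDerivWithinAt x
    ((hasDerivWithinAt_id x _).prodMk (hasDerivWithinAt_const x _ t)) fun y hy => hy

lemma exists_hasC2DerivFstOn_of_contDiffOn {F : ℝ → ℝ → E} (hab : a < b)
    (hF : ContDiffOn ℝ 2 (uncurry F) (lowerTriangle a b)) :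
    ∃ Fx Fxx, HasC2DerivFstOn F Fx Fxx a b := by
  have hunique := uniqueDiffOn_lowerTriangle hab
  obtain ⟨Fx, hFx, hderiv⟩ := exists_contDiffOn_hasDerivWithinAt_fst hunique (n := 1) hF
  obtain ⟨Fxx, hFxx, hderiv'⟩ := exists_contDiffOn_hasDerivWithinAt_fst hunique (n := 0)
    (by simpa using hFx)
  exact ⟨curry Fx, curry Fxx,
    { hasDerivWithinAt t ht x hx :=
        (hderiv x t ⟨ht.1, hx⟩).mono fun y hy => ⟨ht.1, hy⟩
      hasDerivWithinAt_deriv t ht x hx :=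
        (hderiv' x t ⟨ht.1, hx⟩).mono fun y hy => ⟨ht.1, hy⟩
      continuousOn_deriv := hFx.continuousOn
      continuousOn_deriv_deriv := hFxx.continuousOn }⟩

lemma hasDerivWithinAt_comp_diag {K Kt : ℝ → ℝ → E} {x : ℝ} {k' : E}
    (hKx : HasDerivWithinAt (fun y => K y x) k' (Icc x b) x)
    (hKt : ∀ y ∈ Icc x b, ∀ s ∈ Icc x y, HasDerivWithinAt (K y) (Kt y s) (Icc x y) s)
    (hcont : ContinuousWithinAt (uncurry Kt) (lowerTriangle x b) (x, x)) :
    HasDerivWithinAt (fun y => K y y) (k' + Kt x x) (Icc x b) x := by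
  suffices hrow : HasDerivWithinAt (fun y => K y y - K y x) (Kt x x) (Icc x b) x by
    simpa using hKx.fun_add hrow
  rw [hasDerivWithinAt_iff_isLittleO, Asymptotics.isLittleO_iff]
  intro ε hε
  obtain ⟨δ, hδ, hclose⟩ := Metric.continuousWithinAt_iff.1 hcont ε hε
  filter_upwards [inter_mem_nhdsWithin (Icc x b) (Metric.ball_mem_nhds x hδ)] with y ⟨hy, hyδ⟩
  have hbound : ∀ s ∈ Ico x y, ‖Kt y s - Kt x x‖ ≤ ε := fun s hs => by
    have hdist : dist (y, s) (x, x) < δ := by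
      rw [Prod.dist_eq, max_lt_iff]
      refine ⟨hyδ, lt_of_le_of_lt ?_ hyδ⟩
      rw [Real.dist_eq, Real.dist_eq, abs_of_nonneg (sub_nonneg.2 hs.1),
        abs_of_nonneg (sub_nonneg.2 hy.1)]
      linarith [hs.2]
    rw [← dist_eq_norm]
    exact (hclose ⟨hs.1, hs.2.le, hy.2⟩ hdist).le
  have hmean := norm_image_sub_le_of_norm_deriv_le_segment'
    (f := fun s => K y s - s • Kt x x) (f' := fun s => Kt y s - Kt x x)
    (fun s hs => by
      simpa using (hKt y hy s hs).fun_sub ((hasDerivWithinAt_id s _).smul_const (Kt x x)))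
    hbound y (right_mem_Icc.2 hy.1)
  calc ‖K y y - K y x - (K x x - K x x) - (y - x) • Kt x x‖
      = ‖(K y y - y • Kt x x) - (K y x - x • Kt x x)‖ := by congr 1; module
    _ ≤ ε * (y - x) := hmean
    _ = ε * ‖y - x‖ := by rw [Real.norm_of_nonneg (sub_nonneg.2 hy.1)]

end TwiceDifferentiable

section Leibniz

variable {E : Type*} [NormedAddCommGroup E] [NormedSpace ℝ E] [CompleteSpace E] {a b : ℝ}

lemma hasDerivWithinAt_integral_Icc {f : ℝ → E} (hf : ContinuousOn f (Icc a b)) {x : ℝ}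
    (hx : x ∈ Icc a b) :
    HasDerivWithinAt (fun y => ∫ t in a..y, f t) (f x) (Icc a b) x := by
  have : Fact (x ∈ Icc a b) := ⟨hx⟩
  have hint : IntervalIntegrable f volume a x :=
    (hf.mono (Icc_subset_Icc_right hx.2)).intervalIntegrable_of_Icc hx.1
  exact intervalIntegral.integral_hasDerivWithinAt_right hint
    (hf.stronglyMeasurableAtFilter_nhdsWithin measurableSet_Icc x) (hf x hx)

variable {F Fx Fxx : ℝ → ℝ → E}

lemma integral_eq_integral_diag_add_integral {y : ℝ} (hay : a ≤ y)
    (hdiag : ContinuousOn (fun t => F t t) (Icc a y))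
    (hF : ∀ t ∈ Icc a y, ∀ x ∈ Icc t y, HasDerivWithinAt (fun y => F y t) (Fx x t) (Icc t y) x)
    (hFx : ContinuousOn (uncurry Fx) (lowerTriangle a y)) :
    ∫ t in a..y, F y t = ∫ s in a..y, (F s s + ∫ t in a..s, Fx s t) := by
  have hint : IntegrableOn (uncurry Fx) (lowerTriangle a y) :=
    hFx.integrableOn_compact isCompact_lowerTriangle
  have hftc : ∀ t ∈ Icc a y, F y t = F t t + ∫ s in t..y, Fx s t := fun t ht => by
    have hcol : ContinuousOn (fun s => Fx s t) (Icc t y) :=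
      hFx.comp (f := fun s => (s, t)) (by fun_prop) fun s hs => ⟨ht.1, hs⟩
    rw [intervalIntegral.integral_eq_sub_of_hasDerivAt_of_le ht.2
      (fun s hs => (hF t ht s hs).continuousWithinAt)
      (fun s hs => (hF t ht s (Ioo_subset_Icc_self hs)).hasDerivAt (Icc_mem_nhds hs.1 hs.2))
      (hcol.intervalIntegrable_of_Icc ht.2), add_sub_cancel]
  have hdiagInt := hdiag.intervalIntegrable_of_Icc (μ := volume) hay
  calc ∫ t in a..y, F y t = ∫ t in a..y, (F t t + ∫ s in t..y, Fx s t) :=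
        intervalIntegral.integral_congr fun t ht => hftc t (uIcc_of_le hay ▸ ht)
    _ = (∫ t in a..y, F t t) + ∫ s in a..y, ∫ t in a..s, Fx s t := by
        rw [intervalIntegral.integral_add hdiagInt
          (intervalIntegrable_integral_lowerTriangle hay hint),
          integral_integral_swap_lowerTriangle hay hint]
    _ = ∫ s in a..y, (F s s + ∫ t in a..s, Fx s t) :=
        (intervalIntegral.integral_add hdiagInt
          ((continuousOn_integral_lowerTriangle hFx).intervalIntegrable_of_Icc hay)).symm

lemma hasDerivWithinAt_integral_lowerTriangle
    (hdiag : ContinuousOn (fun t => F t t) (Icc a b))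
    (hF : ∀ t ∈ Icc a b, ∀ x ∈ Icc t b, HasDerivWithinAt (fun y => F y t) (Fx x t) (Icc t b) x)
    (hFx : ContinuousOn (uncurry Fx) (lowerTriangle a b)) {x : ℝ} (hx : x ∈ Icc a b) :
    HasDerivWithinAt (fun y => ∫ t in a..y, F y t) (F x x + ∫ t in a..x, Fx x t) (Icc a b) x := by
  have hcont := hdiag.fun_add (continuousOn_integral_lowerTriangle hFx)
  refine (hasDerivWithinAt_integral_Icc hcont hx).congr_of_mem (fun y hy => ?_) hx
  have hle : Icc a y ⊆ Icc a b := Icc_subset_Icc_right hy.2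
  exact integral_eq_integral_diag_add_integral hy.1 (hdiag.mono hle)
    (fun t ht s hs => (hF t (hle ht) s ⟨hs.1, hs.2.trans hy.2⟩).mono (Icc_subset_Icc_right hy.2))
    (hFx.mono (lowerTriangle_subset_right hy.2))

lemma HasC2DerivFstOn.hasC2DerivOn_integral {d : ℝ → E} (hF : HasC2DerivFstOn F Fx Fxx a b)
    (hdiag : ∀ x ∈ Icc a b, HasDerivWithinAt (fun y => F y y) (d x) (Icc a b) x)
    (hd : ContinuousOn d (Icc a b)) :
    HasC2DerivOn (fun x => ∫ t in a..x, F x t) (fun x => F x x + ∫ t in a..x, Fx x t)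
      (fun x => d x + (Fx x x + ∫ t in a..x, Fxx x t)) (Icc a b) := by
  have hFxdiag : ContinuousOn (fun t => Fx t t) (Icc a b) :=
    hF.continuousOn_deriv.comp (f := fun t => (t, t)) (by fun_prop)
      fun t ht => ⟨ht.1, le_rfl, ht.2⟩
  exact
    { hasDerivWithinAt x hx :=
        hasDerivWithinAt_integral_lowerTriangle
          (fun t ht => (hdiag t ht).continuousWithinAt) hF.hasDerivWithinAt hF.continuousOn_deriv hx
      hasDerivWithinAt_deriv x hx :=
        (hdiag x hx).add <| hasDerivWithinAt_integral_lowerTriangle hFxdiag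
          hF.hasDerivWithinAt_deriv hF.continuousOn_deriv_deriv hx
      continuousOn_deriv_deriv :=
        hd.add <| hFxdiag.add <| continuousOn_integral_lowerTriangle hF.continuousOn_deriv_deriv }

end Leibniz

section Transmutation

variable {A : Type*} [NormedRing A] [NormedAlgebra ℝ A] {a b : ℝ}

lemma HasC2DerivFstOn.mul_right {K Kx Kxx : ℝ → ℝ → A} {u : ℝ → A}
    (hK : HasC2DerivFstOn K Kx Kxx a b) (hu : ContinuousOn u (Icc a b)) :
    HasC2DerivFstOn (fun x t => K x t * u t) (fun x t => Kx x t * u t) (fun x t => Kxx x t * u t)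
      a b := by
  have hu' : ContinuousOn (fun p : ℝ × ℝ => u p.2) (lowerTriangle a b) :=
    hu.comp (by fun_prop) fun p hp => ⟨hp.1, hp.2.1.trans hp.2.2⟩
  exact
    { hasDerivWithinAt t ht x hx := (hK.hasDerivWithinAt t ht x hx).mul_const (u t)
      hasDerivWithinAt_deriv t ht x hx := (hK.hasDerivWithinAt_deriv t ht x hx).mul_const (u t)
      continuousOn_deriv := hK.continuousOn_deriv.mul hu'
      continuousOn_deriv_deriv := hK.continuousOn_deriv_deriv.mul hu' }

/-- The Volterra operator `(T u)(x) = u(x) + ∫₀ˣ K(x, t) u(t) dt` with kernel `K`. -/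
noncomputable def volterra (K : ℝ → ℝ → A) (u : ℝ → A) (x : ℝ) : A :=
  u x + ∫ t in (0 : ℝ)..x, K x t * u t

/-- The function `k(x, τ) = K(x, τ) - ∫₀ˣ K(t, x) K(t, τ) dt`, the preimage of `K(·, τ)` under the
Volterra operator with kernel `K`. -/
noncomputable def preimageKernel (K : ℝ → ℝ → A) (x τ : ℝ) : A :=
  K x τ - ∫ t in (0 : ℝ)..x, K t x * K t τ

/-- `K` is a transmutation kernel on the triangle `0 ≤ t ≤ x ≤ b` for the pair of operators
`L = d²/dx² - (V x + q x)` and `L₀ = d²/dx² - V x`: with its derivatives `Kx`, `Kxx`, `Kt`, `Ktt` it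
solves the Goursat problem for `L_x K = L₀_t K`. The potentials multiply on the sides that make the
intertwining relation `L T = T L₀` hold in a noncommutative algebra too. -/
structure IsTransmutationKernel (b : ℝ) (V q : ℝ → A) (K Kx Kxx Kt Ktt : ℝ → ℝ → A) : Prop where
  hasDerivWithinAt_fst : ∀ x t, 0 ≤ t → t ≤ x → x ≤ b →
    HasDerivWithinAt (fun y => K y t) (Kx x t) (Icc t b) x
  hasDerivWithinAt_deriv_fst : ∀ x t, 0 ≤ t → t ≤ x → x ≤ b →
    HasDerivWithinAt (fun y => Kx y t) (Kxx x t) (Icc t b) x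
  hasDerivWithinAt_snd : ∀ x t, 0 ≤ t → t ≤ x → x ≤ b →
    HasDerivWithinAt (fun s => K x s) (Kt x t) (Icc 0 x) t
  hasDerivWithinAt_deriv_snd : ∀ x t, 0 ≤ t → t ≤ x → x ≤ b →
    HasDerivWithinAt (fun s => Kt x s) (Ktt x t) (Icc 0 x) t
  continuousOn_deriv : ContinuousOn
    (fun p : ℝ × ℝ => (Kx p.1 p.2, Kxx p.1 p.2, Kt p.1 p.2, Ktt p.1 p.2)) (lowerTriangle 0 b)
  hyperbolic : ∀ x t, 0 < t → t ≤ x → x ≤ b →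
    Kxx x t - (V x + q x) * K x t = Ktt x t - K x t * V t
  hasDerivWithinAt_diag : ∀ x ∈ Icc 0 b,
    HasDerivWithinAt (fun y => K y y) ((2 : ℝ)⁻¹ • q x) (Icc 0 b) x
  apply_zero_right : ∀ x ∈ Icc 0 b, K x 0 = 0

namespace IsTransmutationKernel

variable {V q u u' u'' : ℝ → A} {K Kx Kxx Kt Ktt : ℝ → ℝ → A}

lemma hasC2DerivFstOn (hK : IsTransmutationKernel b V q K Kx Kxx Kt Ktt) :
    HasC2DerivFstOn K Kx Kxx 0 b where
  hasDerivWithinAt t ht x hx := hK.hasDerivWithinAt_fst x t ht.1 hx.1 hx.2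
  hasDerivWithinAt_deriv t ht x hx := hK.hasDerivWithinAt_deriv_fst x t ht.1 hx.1 hx.2
  continuousOn_deriv := hK.continuousOn_deriv.fst
  continuousOn_deriv_deriv := hK.continuousOn_deriv.snd.fst

lemma hasC2DerivOn_snd (hK : IsTransmutationKernel b V q K Kx Kxx Kt Ktt) {x : ℝ} (hx : x ≤ b) :
    HasC2DerivOn (K x) (Kt x) (Ktt x) (Icc 0 x) where
  hasDerivWithinAt t ht := hK.hasDerivWithinAt_snd x t ht.1 ht.2 hx
  hasDerivWithinAt_deriv t ht := hK.hasDerivWithinAt_deriv_snd x t ht.1 ht.2 hx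
  continuousOn_deriv_deriv :=
    hK.continuousOn_deriv.snd.snd.snd.comp (f := fun t => (x, t)) (by fun_prop)
      fun t ht => ⟨ht.1, ht.2, hx⟩

lemma half_potential_eq (hK : IsTransmutationKernel b V q K Kx Kxx Kt Ktt) {x : ℝ}
    (hx : x ∈ Ico 0 b) : (2 : ℝ)⁻¹ • q x = Kx x x + Kt x x := by
  have hxb : x ∈ Icc x b := left_mem_Icc.2 hx.2.le
  refine (uniqueDiffOn_Icc hx.2 x hxb).eq_deriv _
    ((hK.hasDerivWithinAt_diag x (Ico_subset_Icc_self hx)).mono (Icc_subset_Icc_left hx.1))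
    (hasDerivWithinAt_comp_diag
      (hK.hasDerivWithinAt_fst x x hx.1 le_rfl hx.2.le) ?_ ?_)
  · intro y hy s hs
    exact (hK.hasDerivWithinAt_snd y s (hx.1.trans hs.1) hs.2 hy.2).mono (Icc_subset_Icc_left hx.1)
  · exact (hK.continuousOn_deriv.snd.snd.fst _ ⟨hx.1, le_rfl, hx.2.le⟩).mono
      (lowerTriangle_subset_left hx.1)

lemma continuousOn_half_potential (hK : IsTransmutationKernel b V q K Kx Kxx Kt Ktt) :
    ContinuousOn (fun x => (2 : ℝ)⁻¹ • q x) (Ico 0 b) := by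
  have hdiag : MapsTo (fun x => (x, x)) (Ico 0 b) (lowerTriangle 0 b) :=
    fun x hx => ⟨hx.1, le_rfl, hx.2.le⟩
  exact ((hK.continuousOn_deriv.fst.comp (by fun_prop) hdiag).add
    (hK.continuousOn_deriv.snd.snd.fst.comp (by fun_prop) hdiag)).congr
    fun x hx => hK.half_potential_eq hx

end IsTransmutationKernel

variable [CompleteSpace A]

lemma HasC2DerivOn.integral_mul_deriv_deriv_sub {f f' f'' g g' g'' : ℝ → A} (hab : a ≤ b)
    (hf : HasC2DerivOn f f' f'' (Icc a b)) (hg : HasC2DerivOn g g' g'' (Icc a b)) :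
    ∫ t in a..b, (f t * g'' t - f'' t * g t) =
      (f b * g' b - f' b * g b) - (f a * g' a - f' a * g a) := by
  have hderiv : ∀ t ∈ Icc a b, HasDerivWithinAt (fun t => f t * g' t - f' t * g t)
      (f t * g'' t - f'' t * g t) (Icc a b) t := fun t ht => by
    have hwronskian := ((hf.hasDerivWithinAt t ht).mul (hg.hasDerivWithinAt_deriv t ht)).sub
      ((hf.hasDerivWithinAt_deriv t ht).mul (hg.hasDerivWithinAt t ht))
    exact hwronskian.congr_deriv (by abel)
  have hcont : ContinuousOn (fun t => f t * g'' t - f'' t * g t) (Icc a b) :=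
    (hf.continuousOn.mul hg.continuousOn_deriv_deriv).sub
      (hf.continuousOn_deriv_deriv.mul hg.continuousOn)
  exact intervalIntegral.integral_eq_sub_of_hasDerivAt_of_le hab
    (fun t ht => (hderiv t ht).continuousWithinAt)
    (fun t ht => (hderiv t (Ioo_subset_Icc_self ht)).hasDerivAt (Icc_mem_nhds ht.1 ht.2))
    (hcont.intervalIntegrable_of_Icc hab)

lemma exists_hasC2DerivOn_preimageKernel {K : ℝ → ℝ → A} {τ : ℝ} (hτ : 0 < τ)
    (hK : ContDiffOn ℝ 2 (uncurry K) (Prod.swap ⁻¹' lowerTriangle 0 τ)) :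
    ∃ k' k'', HasC2DerivOn (fun x => preimageKernel K x τ) k' k'' (Icc 0 τ) := by
  have hunique := uniqueDiffOn_Icc hτ
  have hcol : ContDiffOn ℝ 2 (fun x => K x τ) (Icc 0 τ) :=
    hK.comp (f := fun x => (x, τ)) (by fun_prop) fun x hx => ⟨hx.1, hx.2, le_rfl⟩
  have hdiag : ContDiffOn ℝ 2 (fun x => K x x) (Icc 0 τ) :=
    hK.comp (f := fun x => (x, x)) (by fun_prop) fun x hx => ⟨hx.1, le_rfl, hx.2⟩
  have hswap : ContDiffOn ℝ 2 (uncurry fun x t => K t x) (lowerTriangle 0 τ) :=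
    hK.comp (f := fun p : ℝ × ℝ => (p.2, p.1)) (by fun_prop) fun _ hp => hp
  obtain ⟨Ks, Kss, hKs⟩ := exists_hasC2DerivFstOn_of_contDiffOn hτ hswap
  have hprod := hasC2DerivOn_of_contDiffOn (hdiag.mul hcol) hunique
  exact ⟨_, _, (hasC2DerivOn_of_contDiffOn hcol hunique).sub <|
    (hKs.mul_right hcol.continuousOn).hasC2DerivOn_integral hprod.hasDerivWithinAt
      hprod.continuousOn_deriv⟩

namespace IsTransmutationKernel

variable {V q u u' u'' : ℝ → A} {K Kx Kxx Kt Ktt : ℝ → ℝ → A}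

lemma hasC2DerivOn_volterra (hK : IsTransmutationKernel b V q K Kx Kxx Kt Ktt) {c : ℝ} (hc : c < b)
    (hu : HasC2DerivOn u u' u'' (Icc 0 c)) :
    HasC2DerivOn (volterra K u)
      (fun x => u' x + (K x x * u x + ∫ t in (0 : ℝ)..x, Kx x t * u t))
      (fun x => u'' x + (((2 : ℝ)⁻¹ • q x * u x + K x x * u' x) +
        (Kx x x * u x + ∫ t in (0 : ℝ)..x, Kxx x t * u t))) (Icc 0 c) := by
  have hle : Icc 0 c ⊆ Icc 0 b := Icc_subset_Icc_right hc.le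
  have hdiag : ∀ x ∈ Icc 0 c,
      HasDerivWithinAt (fun y => K y y) ((2 : ℝ)⁻¹ • q x) (Icc 0 c) x :=
    fun x hx => (hK.hasDerivWithinAt_diag x (hle hx)).mono hle
  have hq : ContinuousOn (fun x => (2 : ℝ)⁻¹ • q x) (Icc 0 c) :=
    hK.continuousOn_half_potential.mono fun x hx => ⟨hx.1, hx.2.trans_lt hc⟩
  exact hu.add <| ((hK.hasC2DerivFstOn.mono hc.le).mul_right hu.continuousOn).hasC2DerivOn_integral
    (fun x hx => (hdiag x hx).mul (hu.hasDerivWithinAt x hx))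
    ((hq.mul hu.continuousOn).add
      (ContinuousOn.mul (fun x hx => (hdiag x hx).continuousWithinAt) hu.continuousOn_deriv))

lemma integral_mul_schrodinger (hK : IsTransmutationKernel b V q K Kx Kxx Kt Ktt) {x : ℝ}
    (hx : x ∈ Icc 0 b) (hu : HasC2DerivOn u u' u'' (Icc 0 x)) (hu0 : u 0 = 0) :
    ∫ t in (0 : ℝ)..x, K x t * (u'' t - V t * u t) =
      (K x x * u' x - Kt x x * u x) + ((∫ t in (0 : ℝ)..x, Kxx x t * u t) -
        (V x + q x) * ∫ t in (0 : ℝ)..x, K x t * u t) := by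
  have hrow := hK.hasC2DerivOn_snd hx.2
  have hint {h : ℝ → A} (hh : ContinuousOn h (Icc 0 x)) : IntervalIntegrable h volume 0 x :=
    hh.intervalIntegrable_of_Icc hx.1
  have hKu : ContinuousOn (fun t => K x t * u t) (Icc 0 x) := hrow.continuousOn.mul hu.continuousOn
  have hcKu : ContinuousOn (fun t => (V x + q x) * (K x t * u t)) (Icc 0 x) :=
    continuousOn_const.mul hKu
  have hKxxu : ContinuousOn (fun t => Kxx x t * u t) (Icc 0 x) :=
    (hK.continuousOn_deriv.snd.fst.comp (f := fun t => (x, t)) (by fun_prop)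
      fun t ht => ⟨ht.1, ht.2, hx.2⟩).mul hu.continuousOn
  have hwronskian : ContinuousOn (fun t => K x t * u'' t - Ktt x t * u t) (Icc 0 x) :=
    (hrow.continuousOn.mul hu.continuousOn_deriv_deriv).sub
      (hrow.continuousOn_deriv_deriv.mul hu.continuousOn)
  calc ∫ t in (0 : ℝ)..x, K x t * (u'' t - V t * u t)
      = ∫ t in (0 : ℝ)..x, ((K x t * u'' t - Ktt x t * u t) +
          (Kxx x t * u t - (V x + q x) * (K x t * u t))) := by
        refine intervalIntegral.integral_congr_ae (Eventually.of_forall fun t ht => ?_)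
        rw [uIoc_of_le hx.1] at ht
        rw [← mul_assoc (V x + q x), ← sub_mul (Kxx x t), hK.hyperbolic x t ht.1 ht.2 hx.2]
        noncomm_ring
    _ = (∫ t in (0 : ℝ)..x, (K x t * u'' t - Ktt x t * u t)) +
          ((∫ t in (0 : ℝ)..x, Kxx x t * u t) -
            (V x + q x) * ∫ t in (0 : ℝ)..x, K x t * u t) := by
        rw [intervalIntegral.integral_add (hint hwronskian) (hint (hKxxu.fun_sub hcKu)),
          intervalIntegral.integral_sub (hint hKxxu) (hint hcKu)]
        congr 2
        exact (ContinuousLinearMap.mul ℝ A (V x + q x)).intervalIntegral_comp_comm (hint hKu)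
    _ = _ := by
        rw [hrow.integral_mul_deriv_deriv_sub hx.1 hu, hK.apply_zero_right x hx, hu0]
        simp only [zero_mul, mul_zero, sub_zero]

lemma volterra_intertwines (hK : IsTransmutationKernel b V q K Kx Kxx Kt Ktt) {x : ℝ}
    (hx : x ∈ Ico 0 b) (hu : HasC2DerivOn u u' u'' (Icc 0 x)) (hu0 : u 0 = 0) :
    u'' x + (((2 : ℝ)⁻¹ • q x * u x + K x x * u' x) +
        (Kx x x * u x + ∫ t in (0 : ℝ)..x, Kxx x t * u t)) - (V x + q x) * volterra K u x =
      volterra K (fun t => u'' t - V t * u t) x := by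
  have hq : q x = (2 : ℝ)⁻¹ • q x + Kx x x + Kt x x := by
    rw [add_assoc, ← hK.half_potential_eq hx]
    module
  have hqu := congr_arg (· * u x) hq
  simp only [add_mul] at hqu
  rw [volterra, volterra, hK.integral_mul_schrodinger (Ico_subset_Icc_self hx) hu hu0, mul_add,
    add_mul _ _ (u x), hqu]
  abel

end IsTransmutationKernel

end Transmutation

theorem stmt_9_general {A : Type*} [NormedRing A] [NormedAlgebra ℝ A] [CompleteSpace A] {b τ : ℝ}
    {V q : ℝ → A} {K Kx Kxx Kt Ktt : ℝ → ℝ → A}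
    (hK : IsTransmutationKernel b V q K Kx Kxx Kt Ktt)
    (hupper : ContDiffOn ℝ 2 (uncurry K) (Prod.swap ⁻¹' lowerTriangle 0 b))
    (hτ : τ ∈ Ioo 0 b) (hKτ : K 0 τ = 0) :
    ∃ g' g'' k' k'' : ℝ → A,
      HasC2DerivOn (volterra K (preimageKernel K · τ)) g' g'' (Icc 0 τ) ∧
      HasC2DerivOn (preimageKernel K · τ) k' k'' (Icc 0 τ) ∧
      ∀ x ∈ Icc 0 τ,
        g'' x - (V x + q x) * volterra K (preimageKernel K · τ) x =
          volterra K (fun t => k'' t - V t * preimageKernel K t τ) x := by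
  have hk0 : preimageKernel K 0 τ = 0 := by
    rw [preimageKernel, intervalIntegral.integral_same, sub_zero, hKτ]
  obtain ⟨k', k'', hk⟩ := exists_hasC2DerivOn_preimageKernel hτ.1
    (hupper.mono (preimage_mono (lowerTriangle_subset_right hτ.2.le)))
  exact ⟨_, _, k', k'', hK.hasC2DerivOn_volterra hτ.2 hk, hk, fun x hx =>
    hK.volterra_intertwines ⟨hx.1, hx.2.trans_lt hτ.2⟩ (hk.mono (Icc_subset_Icc_right hx.2)) hk0⟩

/-- The transmutation relation `L T[k(·,τ)] = T L₀[k(·,τ)]` for the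
preimage `k(x,τ) = K(x,τ) - ∫₀ˣ K(t,x)K(t,τ)dt` of the extended transmutation kernel,
valid for `0 < x < τ < b`. -/
theorem stmt_9 (b l : ℝ) (hb : 0 < b) (hl : -(1/2) ≤ l)
    (q : ℝ → ℂ) (hq : ContinuousOn q (Set.Icc 0 b))
    (K K1x K1xx K1t K1tt : ℝ → ℝ → ℂ)
    (hKc : ContinuousOn (fun p : ℝ × ℝ => K p.1 p.2) (Set.Icc 0 b ×ˢ Set.Icc 0 b))
    -- the restriction of K to the closed lower triangle is C²
    (h1x : ∀ x t : ℝ, 0 ≤ t → t ≤ x → x ≤ b →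
      HasDerivWithinAt (fun y => K y t) (K1x x t) (Set.Icc t b) x)
    (h1xx : ∀ x t : ℝ, 0 ≤ t → t ≤ x → x ≤ b →
      HasDerivWithinAt (fun y => K1x y t) (K1xx x t) (Set.Icc t b) x)
    (h1t : ∀ x t : ℝ, 0 ≤ t → t ≤ x → x ≤ b →
      HasDerivWithinAt (fun s => K x s) (K1t x t) (Set.Icc 0 x) t)
    (h1tt : ∀ x t : ℝ, 0 ≤ t → t ≤ x → x ≤ b →
      HasDerivWithinAt (fun s => K1t x s) (K1tt x t) (Set.Icc 0 x) t)
    (h1c : ContinuousOn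
      (fun p : ℝ × ℝ => (K1x p.1 p.2, K1xx p.1 p.2, K1t p.1 p.2, K1tt p.1 p.2))
      {p : ℝ × ℝ | 0 ≤ p.2 ∧ p.2 ≤ p.1 ∧ p.1 ≤ b})
    -- the restriction of K to the closed upper triangle is C²
    (h2 : ContDiffOn ℝ 2 (fun p : ℝ × ℝ => K p.1 p.2)
      {p : ℝ × ℝ | 0 ≤ p.1 ∧ p.1 ≤ p.2 ∧ p.2 ≤ b})
    -- (i) the singular hyperbolic equation on the lower triangle
    (hPDE : ∀ x t : ℝ, 0 < t → t ≤ x → x ≤ b →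
      K1xx x t - K1tt x t - ((l * (l + 1) / x ^ 2 : ℝ) : ℂ) * K x t +
        ((l * (l + 1) / t ^ 2 : ℝ) : ℂ) * K x t - q x * K x t = 0)
    -- (ii) the Goursat condition on the diagonal
    (hdiag : ∀ x ∈ Set.Icc (0:ℝ) b, HasDerivWithinAt (fun y => K y y) (q x / 2) (Set.Icc 0 b) x)
    -- (iii) vanishing on the coordinate axes
    (hK0 : ∀ x ∈ Set.Icc (0:ℝ) b, K x 0 = 0)
    (hK0' : ∀ t ∈ Set.Icc (0:ℝ) b, K 0 t = 0)
    (k Tk : ℝ → ℝ → ℂ)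
    (hk : ∀ x τ : ℝ, k x τ = K x τ - ∫ t in (0:ℝ)..x, K t x * K t τ)
    (hTk : ∀ x τ : ℝ, Tk x τ = k x τ + ∫ t in (0:ℝ)..x, K x t * k t τ) :
    ∀ x τ : ℝ, 0 < x → x < τ → τ < b →
      ∃ g1 g2 m1 m2 : ℝ → ℂ,
        (∀ y ∈ Set.Ioo (0:ℝ) τ, HasDerivAt (fun z => Tk z τ) (g1 y) y) ∧
        (∀ y ∈ Set.Ioo (0:ℝ) τ, HasDerivAt g1 (g2 y) y) ∧
        (∀ y ∈ Set.Ioo (0:ℝ) τ, HasDerivAt (fun z => k z τ) (m1 y) y) ∧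
        (∀ y ∈ Set.Ioo (0:ℝ) τ, HasDerivAt m1 (m2 y) y) ∧
        g2 x - (((l * (l + 1) / x ^ 2 : ℝ) : ℂ) + q x) * Tk x τ =
          (m2 x - ((l * (l + 1) / x ^ 2 : ℝ) : ℂ) * k x τ) +
            ∫ t in (0:ℝ)..x, K x t * (m2 t - ((l * (l + 1) / t ^ 2 : ℝ) : ℂ) * k t τ) := by
  have hKernel : IsTransmutationKernel b (fun x => ((l * (l + 1) / x ^ 2 : ℝ) : ℂ)) q
      K K1x K1xx K1t K1tt :=
    ⟨h1x, h1xx, h1t, h1tt, h1c, fun x t ht htx hxb => by linear_combination hPDE x t ht htx hxb,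
      fun x hx => by simpa [div_eq_inv_mul] using hdiag x hx, hK0⟩
  obtain rfl : k = preimageKernel K := funext₂ hk
  obtain rfl : Tk = fun x τ => volterra K (preimageKernel K · τ) x := funext₂ hTk
  intro x τ hx hxτ hτ
  obtain ⟨g1, g2, m1, m2, hg, hm, heq⟩ :=
    stmt_9_general hKernel h2 ⟨hx.trans hxτ, hτ⟩ (hK0' τ ⟨(hx.trans hxτ).le, hτ.le⟩)
  have hnhds : ∀ y ∈ Ioo 0 τ, Icc 0 τ ∈ 𝓝 y := fun y hy => Icc_mem_nhds hy.1 hy.2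
  exact ⟨g1, g2, m1, m2, fun y hy => hg.hasDerivAt (hnhds y hy),
    fun y hy => hg.hasDerivAt_deriv (hnhds y hy), fun y hy => hm.hasDerivAt (hnhds y hy),
    fun y hy => hm.hasDerivAt_deriv (hnhds y hy), heq x ⟨hx.le, hxτ.le⟩⟩
end
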